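/- arXiv:2603.18563 — 8 statements merged into one kernel-verified Lean document; each statement's English description precedes it below -/
import Mathlib

section
/- Let S be a nonempty finite set, p a probability vector on S, Σ a nonempty type, and V : Σ → S → ℝ a function with 0 ≤ V σ g ≤ 1 for all σ ∈ Σ and g ∈ S. Suppose that for each g ∈ S there exists σ_g ∈ Σ attaining the supremum, i.e. V (σ_g) g = ⨆_{σ ∈ Σ} V σ g. Then ∑_{g' ∈ S} p g' · ( ∑_{g ∈ S} p g · V (σ_{g'}) g ) ≥ ( ⨆_{σ ∈ Σ} ∑_{g ∈ S} p g · V σ g ) − ( 1 − ∑_{g ∈ S} (p g)² ). (This is the abstract content of 'posterior-sampling best response is a D-best response': S is a finite menu of opponent hypotheses, p the posterior over the menu, Σ the set of continuation strategies, V σ g the continuation value of σ against hypothesis g, all values normalized to [0,1], and D = 1 − ∑_g (p g)² is the posterior collision complement.) -/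
/-!
Draw the sampled hypothesis `g'` and the true hypothesis `g` independently from `p`. An agent
told `g` would earn `V (sel g) g`, which no fixed strategy beats. The agent playing `sel g'` earns
exactly this when `g' = g`, and loses at most `1` against it otherwise. Hence its expected loss is
at most the probability `1 - ∑ g, p g ^ 2` that the two draws differ.
-/

section ProbabilityVector

variable {S : Type*} {p : S → ℝ}

theorem summable_mul_of_mem_Icc {x : S → ℝ} (hp0 : ∀ g, 0 ≤ p g) (hp : Summable p)
    (hx : ∀ g, x g ∈ Set.Icc 0 1) : Summable fun g ↦ p g * x g :=
  hp.of_nonneg_of_le (fun g ↦ mul_nonneg (hp0 g) (hx g).1)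
    fun g ↦ mul_le_of_le_one_right (hp0 g) (hx g).2

theorem tsum_mul_mem_Icc {x : S → ℝ} (hp0 : ∀ g, 0 ≤ p g) (hp : HasSum p 1)
    (hx : ∀ g, x g ∈ Set.Icc 0 1) : ∑' g, p g * x g ∈ Set.Icc 0 1 :=
  ⟨tsum_nonneg fun g ↦ mul_nonneg (hp0 g) (hx g).1,
    hasSum_le (fun g ↦ mul_le_of_le_one_right (hp0 g) (hx g).2)
      (summable_mul_of_mem_Icc hp0 hp.summable hx).hasSum hp⟩

theorem le_one_of_hasSum_one (hp0 : ∀ g, 0 ≤ p g) (hp : HasSum p 1) (g : S) : p g ≤ 1 :=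
  le_hasSum hp g fun h _ ↦ hp0 h

theorem apply_le_tsum_mul_add_one_sub {x : S → ℝ} (hp0 : ∀ g, 0 ≤ p g) (hp : HasSum p 1)
    (hx : ∀ g, x g ∈ Set.Icc 0 1) (g : S) : x g ≤ ∑' h, p h * x h + (1 - p g) := by
  have atom_le : p g * x g ≤ ∑' h, p h * x h :=
    (summable_mul_of_mem_Icc hp0 hp.summable hx).le_tsum g
      fun h _ ↦ mul_nonneg (hp0 h) (hx h).1
  have rest_le : (1 - p g) * x g ≤ 1 - p g :=
    mul_le_of_le_one_right (sub_nonneg.2 (le_one_of_hasSum_one hp0 hp g)) (hx g).2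
  linarith

theorem tsum_mul_diag_le_tsum_mul_tsum_add {W : S → S → ℝ} (hp0 : ∀ g, 0 ≤ p g)
    (hp : HasSum p 1) (hW : ∀ g' g, W g' g ∈ Set.Icc 0 1) :
    ∑' g, p g * W g g ≤ ∑' g', p g' * ∑' g, p g * W g' g + (1 - ∑' g, p g ^ 2) := by
  have hdiag : Summable fun g ↦ p g * W g g :=
    summable_mul_of_mem_Icc hp0 hp.summable fun g ↦ hW g g
  have hmean : Summable fun g' ↦ p g' * ∑' g, p g * W g' g :=
    summable_mul_of_mem_Icc hp0 hp.summable fun g' ↦ tsum_mul_mem_Icc hp0 hp (hW g')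
  have hsq : Summable fun g ↦ p g ^ 2 := by
    simpa only [sq] using summable_mul_of_mem_Icc hp0 hp.summable
      fun g ↦ ⟨hp0 g, le_one_of_hasSum_one hp0 hp g⟩
  refine hasSum_le (fun g ↦ ?_) hdiag.hasSum (hmean.hasSum.add (hp.sub hsq.hasSum))
  calc p g * W g g
      ≤ p g * (∑' h, p h * W g h + (1 - p g)) :=
        mul_le_mul_of_nonneg_left (apply_le_tsum_mul_add_one_sub hp0 hp (hW g) g) (hp0 g)
    _ = p g * ∑' h, p h * W g h + (p g - p g ^ 2) := by ring

end ProbabilityVector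

theorem psbr_is_D_best_response_general {S T : Type*} [Nonempty T]
    (p : S → ℝ) (hp0 : ∀ g, 0 ≤ p g) (hp1 : HasSum p 1)
    (V : T → S → ℝ) (hV0 : ∀ σ g, 0 ≤ V σ g) (hV1 : ∀ σ g, V σ g ≤ 1)
    (sel : S → T) (hsel : ∀ g, V (sel g) g = ⨆ σ, V σ g) :
    ∑' g', p g' * ∑' g, p g * V (sel g') g ≥
      (⨆ σ, ∑' g, p g * V σ g) - (1 - ∑' g, p g ^ 2) := by
  have hV (σ : T) (g : S) : V σ g ∈ Set.Icc 0 1 := ⟨hV0 σ g, hV1 σ g⟩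
  have le_sel (σ : T) (g : S) : V σ g ≤ V (sel g) g :=
    hsel g ▸ le_ciSup (f := fun τ ↦ V τ g) ⟨1, Set.forall_mem_range.2 fun τ ↦ hV1 τ g⟩ σ
  refine sub_le_iff_le_add.2 (ciSup_le fun σ ↦ ?_)
  calc ∑' g, p g * V σ g
      ≤ ∑' g, p g * V (sel g) g :=
        (summable_mul_of_mem_Icc hp0 hp1.summable (hV σ)).tsum_le_tsum
          (fun g ↦ mul_le_mul_of_nonneg_left (le_sel σ g) (hp0 g))
          (summable_mul_of_mem_Icc hp0 hp1.summable fun g ↦ hV (sel g) g)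
    _ ≤ ∑' g', p g' * ∑' g, p g * V (sel g') g + (1 - ∑' g, p g ^ 2) :=
        tsum_mul_diag_le_tsum_mul_tsum_add hp0 hp1 fun g' ↦ hV (sel g')

/-- **PS-BR is a D-best response** (abstract form).
`S` is a finite menu of opponent hypotheses, `p` the posterior over the menu,
`T` the set of continuation strategies, `V σ g` the continuation value of `σ`
against hypothesis `g`, normalized to `[0,1]`. If `sel g` attains the supremum
value against `g`, then posterior-sampling best response is within
`D = 1 - ∑ g, (p g)^2` of the best value against the posterior mixture. -/
theorem psbr_is_D_best_response {S T : Type*} [Fintype S] [Nonempty S] [Nonempty T]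
    (p : S → ℝ) (hp0 : ∀ g, 0 ≤ p g) (hp1 : ∑ g, p g = 1)
    (V : T → S → ℝ) (hV0 : ∀ σ g, 0 ≤ V σ g) (hV1 : ∀ σ g, V σ g ≤ 1)
    (sel : S → T) (hsel : ∀ g, V (sel g) g = ⨆ σ, V σ g) :
    ∑ g', p g' * ∑ g, p g * V (sel g') g ≥
      (⨆ σ, ∑ g, p g * V σ g) - (1 - ∑ g, (p g) ^ 2) := by
  simpa only [tsum_fintype] using
    psbr_is_D_best_response_general p hp0 (hp1 ▸ hasSum_fintype p) V hV0 hV1 sel hsel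
end

section
/- Let S and M be nonempty finite sets, q a probability vector on S, π a probability vector on M, Σ a nonempty type, and V : Σ → (S × M) → ℝ a function with 0 ≤ V τ (g,m) ≤ 1 for all τ, g, m. Suppose that for each (g,m) ∈ S × M there exists τ_{(g,m)} ∈ Σ with V (τ_{(g,m)}) (g,m) = ⨆_{τ ∈ Σ} V τ (g,m). Then ∑_{(g',m') ∈ S × M} q g' · π m' · ( ∑_{(g,m) ∈ S × M} q g · π m · V (τ_{(g',m')}) (g,m) ) ≥ ( ⨆_{τ ∈ Σ} ∑_{(g,m) ∈ S × M} q g · π m · V τ (g,m) ) − ( 1 − ∑_{(g,m) ∈ S × M} (q g · π m)² ). (This is the abstract content of 'PS-BR with joint sampling of an opponent model and a payoff hypothesis is a D^{joint}-best response', where the joint posterior is the product p(g,m) = q g · π m and D^{joint} = 1 − ∑_{(g,m)} p(g,m)².) -/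
/-!
If the true hypothesis is `a`, the policy `sel a` is optimal. When `a` is drawn from the posterior
`p`, the event that an independent second draw from `p` differs from `a` has probability
`1 - p a`, and only on that event does `sel a` lose anything against full information. Averaging
over `a`, sampling loses at most `∑ a, p a * (1 - p a) = 1 - ∑ a, p a ^ 2` times the payoff
oscillation against full information, whose value is at least that of every fixed policy.
-/

theorem mul_mem_stdSimplex_prod {R S M : Type*} [Semiring R] [PartialOrder R] [IsOrderedRing R]
    [Fintype S] [Fintype M] {q : S → R} {π : M → R}
    (hq : q ∈ stdSimplex R S) (hπ : π ∈ stdSimplex R M) :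
    (fun a : S × M => q a.1 * π a.2) ∈ stdSimplex R (S × M) := by
  refine ⟨fun a => mul_nonneg (hq.1 a.1) (hπ.1 a.2), ?_⟩
  rw [Fintype.sum_prod_type, ← Fintype.sum_mul_sum, hq.2, hπ.2, one_mul]

section OrderedRing

variable {R A : Type*} [Ring R] [Fintype A]

/-- The Gini impurity of the weights `p`: for a probability vector, the probability that two
independent draws from `p` differ. It is the loss `D` in the notion of a `D`-best response. -/
def giniImpurity (p : A → R) : R :=
  1 - ∑ a, p a ^ 2

theorem giniImpurity_eq_sum_mul_one_sub {p : A → R} (hp : ∑ a, p a = 1) :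
    giniImpurity p = ∑ a, p a * (1 - p a) := by
  simp only [giniImpurity, mul_one_sub, Finset.sum_sub_distrib, hp, pow_two]

variable [PartialOrder R] [IsOrderedRing R]

theorem sub_sum_mul_le_one_sub_mul {p v : A → R} {C : R} {a : A} (hp : p ∈ stdSimplex R A)
    (hv : ∀ b, v a - v b ≤ C) : v a - ∑ b, p b * v b ≤ (1 - p a) * C := by
  classical
  calc v a - ∑ b, p b * v b
      = ∑ b, p b * (v a - v b) := by
        simp only [mul_sub, Finset.sum_sub_distrib, ← Finset.sum_mul, hp.2, one_mul]
    _ = ∑ b ∈ Finset.univ.erase a, p b * (v a - v b) :=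
        (Finset.sum_erase _ (by rw [sub_self, mul_zero])).symm
    _ ≤ ∑ b ∈ Finset.univ.erase a, p b * C :=
        Finset.sum_le_sum fun b _ => mul_le_mul_of_nonneg_left (hv b) (hp.1 b)
    _ = (1 - p a) * C := by
        rw [← Finset.sum_mul, Finset.sum_erase_eq_sub (Finset.mem_univ a), hp.2]

theorem sum_mul_apply_sub_giniImpurity_mul_le {p : A → R} {W : A → A → R} {C : R}
    (hp : p ∈ stdSimplex R A) (hW : ∀ a b, W a a - W a b ≤ C) :
    ∑ a, p a * W a a - giniImpurity p * C ≤ ∑ a, p a * ∑ b, p b * W a b := by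
  rw [giniImpurity_eq_sum_mul_one_sub hp.2, Finset.sum_mul, ← Finset.sum_sub_distrib]
  refine Finset.sum_le_sum fun a _ => ?_
  rw [mul_assoc, ← mul_sub]
  exact mul_le_mul_of_nonneg_left (sub_le_comm.1 (sub_sum_mul_le_one_sub_mul hp (hW a))) (hp.1 a)

end OrderedRing

theorem psbr_joint_is_Djoint_best_response_general {A T : Type*} [Fintype A]
    {p : A → ℝ} (hp : p ∈ stdSimplex ℝ A) {V : T → A → ℝ} {sel : A → T} {C : ℝ}
    (hC : ∀ a b, V (sel a) a - V (sel a) b ≤ C) (hsel : ∀ a τ, V τ a ≤ V (sel a) a) :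
    (⨆ τ, ∑ a, p a * V τ a) - giniImpurity p * C ≤ ∑ a, p a * ∑ b, p b * V (sel a) b := by
  obtain ⟨a₀, -⟩ := Finset.exists_ne_zero_of_sum_ne_zero (hp.2.trans_ne one_ne_zero)
  have : Nonempty T := ⟨sel a₀⟩
  have full_information : (⨆ τ, ∑ a, p a * V τ a) ≤ ∑ a, p a * V (sel a) a :=
    ciSup_le fun τ => Finset.sum_le_sum fun a _ => mul_le_mul_of_nonneg_left (hsel a τ) (hp.1 a)
  exact (sub_le_sub_right full_information _).trans
    (sum_mul_apply_sub_giniImpurity_mul_le (W := fun a => V (sel a)) hp hC)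

/-- **PS-BR with joint sampling of an opponent model and a payoff hypothesis is a
`D^joint`-best response** (abstract form). The joint posterior is the product
`p (g,m) = q g * π m` and `D^joint = 1 - ∑ (g,m), (q g * π m)^2`. -/
theorem psbr_joint_is_Djoint_best_response {S M T : Type*}
    [Fintype S] [Nonempty S] [Fintype M] [Nonempty M] [Nonempty T]
    (q : S → ℝ) (hq0 : ∀ g, 0 ≤ q g) (hq1 : ∑ g, q g = 1)
    (π : M → ℝ) (hπ0 : ∀ m, 0 ≤ π m) (hπ1 : ∑ m, π m = 1)
    (V : T → S × M → ℝ) (hV0 : ∀ τ gm, 0 ≤ V τ gm) (hV1 : ∀ τ gm, V τ gm ≤ 1)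
    (sel : S × M → T) (hsel : ∀ gm, V (sel gm) gm = ⨆ τ, V τ gm) :
    ∑ gm' : S × M, q gm'.1 * π gm'.2 * ∑ gm : S × M, q gm.1 * π gm.2 * V (sel gm') gm ≥
      (⨆ τ, ∑ gm : S × M, q gm.1 * π gm.2 * V τ gm) -
        (1 - ∑ gm : S × M, (q gm.1 * π gm.2) ^ 2) := by
  have hsel_max (gm : S × M) (τ : T) : V τ gm ≤ V (sel gm) gm :=
    (le_ciSup ⟨1, Set.forall_mem_range.2 fun τ => hV1 τ gm⟩ τ).trans_eq (hsel gm).symm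
  simpa only [giniImpurity, mul_one] using psbr_joint_is_Djoint_best_response_general
    (mul_mem_stdSimplex_prod ⟨hq0, hq1⟩ ⟨hπ0, hπ1⟩)
    (fun a b => (sub_le_self _ (hV0 (sel a) b)).trans (hV1 (sel a) a)) hsel_max
end

section
/- Let A and B be nonempty finite sets and u : A → B → ℝ with 0 ≤ u a b ≤ 1 for all a, b. Let S be a nonempty finite set, p a probability vector on S, and for each g ∈ S let q_g be a probability vector on B and α_g a probability vector on A satisfying ∑_{a∈A} ∑_{b∈B} α_g a · q_g b · u a b = ⨆_{α} ∑_{a∈A} ∑_{b∈B} α a · q_g b · u a b, where the supremum is over probability vectors α on A. Define ᾱ a := ∑_{g∈S} p g · α_g a and q̄ b := ∑_{g∈S} p g · q_g b. Then ∑_{a∈A} ∑_{b∈B} ᾱ a · q̄ b · u a b ≥ ( ⨆_{α} ∑_{a∈A} ∑_{b∈B} α a · q̄ b · u a b ) − ( 1 − ∑_{g∈S} (p g)² ). (This is the statement that myopic posterior-sampling best response is a D-best response to the one-step posterior predictive belief, with D = 1 − ∑_g (p g)² the posterior collision complement.) -/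
/-- A probability vector on a finite set `S`. -/
def IsProbVec {S : Type*} [Fintype S] (p : S → ℝ) : Prop :=
  (∀ s, 0 ≤ p s) ∧ ∑ s, p s = 1

/-! The best-response value is a supremum of linear functions of the belief, hence convex. With
`V g` its value at `q g`, its value at the predictive belief is thus at most `∑ g, p g * V g`.
The averaged action earns a double sum over pairs of hypotheses whose diagonal part is
`∑ g, p g ^ 2 * V g`, the off-diagonal part being nonnegative. The loss is therefore at most
`∑ g, (p g - p g ^ 2) * V g ≤ ∑ g, (p g - p g ^ 2)`. -/

open Finset

section

variable {A B S : Type*} [Fintype A] [Fintype B] [Fintype S]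

/-- The expected stage payoff of the mixed action `x` against the belief `y`. It is defined for
arbitrary weights, so that it is bilinear in `(x, y)`. -/
def expectedPayoff (u : A → B → ℝ) (x : A → ℝ) (y : B → ℝ) : ℝ :=
  ∑ a, ∑ b, x a * y b * u a b

/-- The best-response value against the belief `y`: the largest expected payoff of a mixed
action. -/
noncomputable def bestResponseValue (u : A → B → ℝ) (y : B → ℝ) : ℝ :=
  ⨆ β : {β : A → ℝ // IsProbVec β}, expectedPayoff u β.1 y

/-- The mixture of the vectors `q g` with weights `p g`. With `p` the posterior, it is the
posterior predictive belief when the `q g` are beliefs, and the posterior-sampling action when they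
are mixed actions. -/
def mixture (p : S → ℝ) (q : S → B → ℝ) : B → ℝ :=
  fun b ↦ ∑ g, p g * q g b

theorem expectedPayoff_mixture_left (u : A → B → ℝ) (p : S → ℝ) (α : S → A → ℝ) (y : B → ℝ) :
    expectedPayoff u (mixture p α) y = ∑ g, p g * expectedPayoff u (α g) y := by
  simp only [expectedPayoff, mixture, mul_sum, sum_mul, mul_assoc]
  rw [sum_comm_cycle]

theorem expectedPayoff_mixture_right (u : A → B → ℝ) (p : S → ℝ) (x : A → ℝ) (q : S → B → ℝ) :
    expectedPayoff u x (mixture p q) = ∑ g, p g * expectedPayoff u x (q g) := by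
  simp only [expectedPayoff, mixture, mul_sum, sum_mul, mul_assoc, mul_left_comm (x _)]
  rw [sum_comm_cycle]

theorem expectedPayoff_nonneg {u : A → B → ℝ} {x : A → ℝ} {y : B → ℝ} (hu : ∀ a b, 0 ≤ u a b)
    (hx : ∀ a, 0 ≤ x a) (hy : ∀ b, 0 ≤ y b) : 0 ≤ expectedPayoff u x y :=
  sum_nonneg fun a _ ↦ sum_nonneg fun b _ ↦ mul_nonneg (mul_nonneg (hx a) (hy b)) (hu a b)

theorem expectedPayoff_le_of_forall_le {u : A → B → ℝ} {x : A → ℝ} {y : B → ℝ} {c : ℝ}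
    (hu : ∀ a b, u a b ≤ c) (hx : IsProbVec x) (hy : IsProbVec y) : expectedPayoff u x y ≤ c :=
  calc
    expectedPayoff u x y ≤ ∑ a, ∑ b, x a * y b * c :=
      sum_le_sum fun a _ ↦ sum_le_sum fun b _ ↦
        mul_le_mul_of_nonneg_left (hu a b) (mul_nonneg (hx.1 a) (hy.1 b))
    _ = c := by simp only [← sum_mul, ← mul_sum, hx.2, hy.2, one_mul, mul_one]

theorem bddAbove_range_expectedPayoff (u : A → B → ℝ) (y : B → ℝ) :
    BddAbove (Set.range fun β : {β : A → ℝ // IsProbVec β} ↦ expectedPayoff u β.1 y) := by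
  have hcont : Continuous fun x ↦ expectedPayoff u x y := by
    unfold expectedPayoff
    fun_prop
  -- `IsProbVec β` unfolds to `β ∈ stdSimplex ℝ A`.
  have hbdd := (isCompact_stdSimplex ℝ A).bddAbove_image hcont.continuousOn
  rwa [Set.image_eq_range] at hbdd

theorem expectedPayoff_le_bestResponseValue (u : A → B → ℝ) {x : A → ℝ} (hx : IsProbVec x)
    (y : B → ℝ) : expectedPayoff u x y ≤ bestResponseValue u y :=
  le_ciSup (bddAbove_range_expectedPayoff u y) ⟨x, hx⟩

theorem bestResponseValue_mixture_le [Nonempty A] (u : A → B → ℝ) {p : S → ℝ} (hp : ∀ g, 0 ≤ p g)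
    (q : S → B → ℝ) :
    bestResponseValue u (mixture p q) ≤ ∑ g, p g * bestResponseValue u (q g) := by
  have : Nonempty {β : A → ℝ // IsProbVec β} :=
    inferInstanceAs (Nonempty (stdSimplex ℝ A))
  refine ciSup_le fun β ↦ ?_
  rw [expectedPayoff_mixture_right]
  gcongr with g
  · exact hp g
  · exact expectedPayoff_le_bestResponseValue u β.2 (q g)

theorem sum_sq_mul_expectedPayoff_le_mixture {u : A → B → ℝ} (hu : ∀ a b, 0 ≤ u a b) {p : S → ℝ}
    (hp : ∀ g, 0 ≤ p g) {α : S → A → ℝ} (hα : ∀ g a, 0 ≤ α g a) {q : S → B → ℝ}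
    (hq : ∀ g b, 0 ≤ q g b) :
    ∑ g, p g ^ 2 * expectedPayoff u (α g) (q g) ≤
      expectedPayoff u (mixture p α) (mixture p q) := by
  rw [expectedPayoff_mixture_left]
  simp only [expectedPayoff_mixture_right, sq, mul_assoc]
  gcongr with g
  · exact hp g
  · exact single_le_sum (f := fun h ↦ p h * expectedPayoff u (α g) (q h))
      (fun h _ ↦ mul_nonneg (hp h) (expectedPayoff_nonneg hu (hα g) (hq h))) (mem_univ g)

theorem IsProbVec.sum_mul_sub_sum_sq_mul_le {p : S → ℝ} (hp : IsProbVec p) {v : S → ℝ} {c : ℝ}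
    (hv : ∀ g, v g ≤ c) : ∑ g, p g * v g - ∑ g, p g ^ 2 * v g ≤ (1 - ∑ g, p g ^ 2) * c := by
  have hsq (g : S) : 0 ≤ p g - p g ^ 2 :=
    sub_nonneg.2 (pow_le_of_le_one (hp.1 g) (mem_Icc_of_mem_stdSimplex hp g).2 two_ne_zero)
  calc
    ∑ g, p g * v g - ∑ g, p g ^ 2 * v g = ∑ g, (p g - p g ^ 2) * v g := by
      simp only [sub_mul, sum_sub_distrib]
    _ ≤ ∑ g, (p g - p g ^ 2) * c :=
      sum_le_sum fun g _ ↦ mul_le_mul_of_nonneg_left (hv g) (hsq g)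
    _ = (1 - ∑ g, p g ^ 2) * c := by rw [← sum_mul, sum_sub_distrib, hp.2]

end

/-- **Myopic PS-BR is a `D`-stage best response.** For each hypothesis `g`,
`α g` is a stage best response (over mixed actions) to the belief `q g`; then the
posterior-averaged mixed action `ᾱ = ∑ g, p g • α g` is a
`D = 1 - ∑ g, (p g)^2` best response to the one-step posterior predictive
belief `q̄ = ∑ g, p g • q g`. -/
theorem myopic_psbr_is_D_best_response {A B S : Type*}
    [Fintype A] [Nonempty A] [Fintype B] [Nonempty B] [Fintype S] [Nonempty S]
    (u : A → B → ℝ) (hu0 : ∀ a b, 0 ≤ u a b) (hu1 : ∀ a b, u a b ≤ 1)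
    (p : S → ℝ) (hp : IsProbVec p)
    (q : S → B → ℝ) (hq : ∀ g, IsProbVec (q g))
    (α : S → A → ℝ) (hα : ∀ g, IsProbVec (α g))
    (hbr : ∀ g, ∑ a, ∑ b, α g a * q g b * u a b =
      ⨆ β : {β : A → ℝ // IsProbVec β}, ∑ a, ∑ b, β.1 a * q g b * u a b) :
    ∑ a, ∑ b, (∑ g, p g * α g a) * (∑ g, p g * q g b) * u a b ≥
      (⨆ β : {β : A → ℝ // IsProbVec β},
          ∑ a, ∑ b, β.1 a * (∑ g, p g * q g b) * u a b) -
        (1 - ∑ g, (p g) ^ 2) := by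
  have hbest (g : S) : expectedPayoff u (α g) (q g) = bestResponseValue u (q g) := hbr g
  have hvalue : bestResponseValue u (mixture p q) ≤ ∑ g, p g * expectedPayoff u (α g) (q g) := by
    simpa only [hbest] using bestResponseValue_mixture_le u hp.1 q
  have hdiag : ∑ g, p g ^ 2 * expectedPayoff u (α g) (q g) ≤
      expectedPayoff u (mixture p α) (mixture p q) :=
    sum_sq_mul_expectedPayoff_le_mixture hu0 hp.1 (fun g ↦ (hα g).1) (fun g ↦ (hq g).1)
  have hloss : ∑ g, p g * expectedPayoff u (α g) (q g) -
      ∑ g, p g ^ 2 * expectedPayoff u (α g) (q g) ≤ (1 - ∑ g, p g ^ 2) * 1 :=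
    hp.sum_mul_sub_sum_sq_mul_le fun g ↦ expectedPayoff_le_of_forall_le hu1 (hα g) (hq g)
  change bestResponseValue u (mixture p q) - (1 - ∑ g, p g ^ 2) ≤
    expectedPayoff u (mixture p α) (mixture p q)
  linarith
end

section
/- Let (Ω, 𝒜, μ) be a probability space and 𝔉 : ℕ → sub-σ-algebras of 𝒜 a filtration (𝔉 s ⊆ 𝔉 (s+1) for all s). Let S be a nonempty finite set, f ∈ S, and π₀ : S → ℝ with π₀ g > 0 for all g and ∑_{g∈S} π₀ g = 1. Fix ν ∈ (0,1), and for each g ∈ S let ℓ g : ℕ → Ω → ℝ be a sequence of random variables such that ℓ g s is 𝔉(s+1)-measurable and ν ≤ ℓ g s ω ≤ 1 for all s and ω. Assume that for every g ∈ S with g ≠ f there exists κ_g > 0 such that μ-almost surely, liminf_{T→∞} (1/T) ∑_{s=0}^{T−1} μ[ log( ℓ f s / ℓ g s ) | 𝔉 s ] ≥ κ_g. Define the posterior π_t g ω := ( π₀ g · ∏_{s<t} ℓ g s ω ) / ( ∑_{g'∈S} π₀ g' · ∏_{s<t} ℓ g' s ω ). Then μ-almost surely, π_t f ω → 1 as t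 → ∞; equivalently, max_{g ∈ S, g ≠ f} π_t g ω → 0 μ-almost surely. (Posterior concentration on a finite cautious hypothesis menu under on-path Kullback–Leibler separation.) -/
open MeasureTheory Filter

/-!
The posterior odds of `g` against `f` are the prior odds times `exp (-∑ s < t, X s)`, where
`X s = log (ℓ f s / ℓ g s)`. The centred sums `∑ s < t, (X s - μ[X s | F s])` form a martingale
with bounded increments, so by Azuma–Hoeffding and Borel–Cantelli they are `o(t)` almost surely.
Since the averages of the compensators `μ[X s | F s]` stay eventually above a positive constant,
the log-likelihood ratio grows at least linearly and the odds of every `g ≠ f` vanish.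
-/

section

open ProbabilityTheory
open scoped NNReal Topology

theorem exp_mul_le_cosh_add_mul_sinh_div {x R : ℝ} (hx : |x| ≤ R) (t : ℝ) :
    Real.exp (t * x) ≤ Real.cosh (t * R) + x * (Real.sinh (t * R) / R) := by
  have hR : 0 ≤ R := (abs_nonneg x).trans hx
  have hxR : x / R * R = x := by
    rcases hR.eq_or_lt with rfl | hR
    · simp [abs_nonpos_iff.1 hx]
    · exact div_mul_cancel₀ x hR.ne'
  have hle : |x / R| ≤ 1 := by
    rw [abs_div, abs_of_nonneg hR]
    exact div_le_one_of_le₀ hx hR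
  calc Real.exp (t * x)
      = Real.exp (x / R * (t * R)) := by rw [mul_left_comm, hxR]
    _ ≤ Real.cosh (t * R) + x / R * Real.sinh (t * R) :=
        Real.exp_mul_le_cosh_add_mul_sinh hle _
    _ = Real.cosh (t * R) + x * (Real.sinh (t * R) / R) := by ring

theorem exp_mul_add_le_cosh_mul_add_sinh_div_mul {d R : ℝ} (hd : |d| ≤ R) (x t : ℝ) :
    Real.exp (t * (x + d)) ≤ Real.cosh (t * R) * Real.exp (t * x) +
      Real.sinh (t * R) / R * (Real.exp (t * x) * d) := by
  calc Real.exp (t * (x + d)) = Real.exp (t * x) * Real.exp (t * d) := by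
        rw [mul_add, Real.exp_add]
    _ ≤ Real.exp (t * x) * (Real.cosh (t * R) + d * (Real.sinh (t * R) / R)) := by
        gcongr
        exact exp_mul_le_cosh_add_mul_sinh_div hd t
    _ = Real.cosh (t * R) * Real.exp (t * x) +
          Real.sinh (t * R) / R * (Real.exp (t * x) * d) := by ring

theorem tendsto_iSup_zero {α ι : Type*} [Finite ι] {l : Filter α} {u : ι → α → ℝ}
    (hu : ∀ i a, 0 ≤ u i a) (h : ∀ i, Tendsto (u i) l (𝓝 0)) :
    Tendsto (fun a => ⨆ i, u i a) l (𝓝 0) := by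
  have := Fintype.ofFinite ι
  have hsum : Tendsto (fun a => ∑ i, u i a) l (𝓝 0) := by
    simpa using tendsto_finsetSum Finset.univ fun i _ => h i
  refine squeeze_zero (fun a => Real.iSup_nonneg fun i => hu i a) (fun a => ?_) hsum
  exact Real.iSup_le
    (fun i => Finset.single_le_sum (fun j _ => hu j a) (Finset.mem_univ i))
    (Finset.sum_nonneg fun i _ => hu i a)

theorem eventually_lt_of_nonneg_of_lt_liminf {α : Type*} {l : Filter α} {u : α → ℝ} {b : ℝ}
    (hb : 0 ≤ b) (h : b < l.liminf u) : ∀ᶠ a in l, b < u a := by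
  rw [liminf_eq] at h
  -- `sSup ∅ = 0 ≤ b`, so `h` itself provides an eventual lower bound of `u`.
  have hne : {a | ∀ᶠ n in l, a ≤ u n}.Nonempty := by
    by_contra hempty
    rw [Set.not_nonempty_iff_eq_empty.1 hempty, Real.sSup_empty] at h
    exact h.not_ge hb
  obtain ⟨c, hc, hbc⟩ := exists_lt_of_lt_csSup hne h
  exact hc.mono fun _ => hbc.trans_le

theorem tendsto_sum_atTop_of_liminf_average_pos {x y : ℕ → ℝ}
    (hxy : Tendsto (fun n : ℕ => (∑ s ∈ Finset.range n, (x s - y s)) / n) atTop (𝓝 0))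
    (hy : 0 < atTop.liminf fun n : ℕ => (1 / (n : ℝ)) * ∑ s ∈ Finset.range n, y s) :
    Tendsto (fun n => ∑ s ∈ Finset.range n, x s) atTop atTop := by
  obtain ⟨c, hc, hcy⟩ := exists_between hy
  have hlinear : ∀ᶠ n : ℕ in atTop, c / 2 * n ≤ ∑ s ∈ Finset.range n, x s := by
    filter_upwards [hxy.eventually_const_lt (neg_lt_zero.2 (half_pos hc)),
      eventually_lt_of_nonneg_of_lt_liminf hc.le hcy, eventually_gt_atTop 0] with n hdiff hcomp hn
    have hn' : (0 : ℝ) < n := Nat.cast_pos.2 hn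
    rw [lt_div_iff₀ hn', Finset.sum_sub_distrib] at hdiff
    rw [one_div_mul_eq_div, lt_div_iff₀ hn'] at hcomp
    linarith
  exact tendsto_atTop_mono' _ hlinear
    (tendsto_natCast_atTop_atTop.const_mul_atTop (half_pos hc))

theorem tendsto_prod_div_prod_zero {a b : ℕ → ℝ} (ha : ∀ s, 0 < a s) (hb : ∀ s, 0 < b s)
    (h : Tendsto (fun n => ∑ s ∈ Finset.range n, Real.log (a s / b s)) atTop atTop) :
    Tendsto (fun n => (∏ s ∈ Finset.range n, b s) / ∏ s ∈ Finset.range n, a s) atTop (𝓝 0) := by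
  refine (Real.tendsto_exp_neg_atTop_nhds_zero.comp h).congr fun n => ?_
  rw [Function.comp_apply, Real.exp_neg, Real.exp_sum, ← inv_div, ← Finset.prod_div_distrib]
  congr! 2 with s
  exact Real.exp_log (div_pos (ha s) (hb s))

section NormalizedWeights

variable {α S : Type*} [Fintype S] {l : Filter α} {w : S → α → ℝ} {f : S}

theorem tendsto_div_sum_one (hf : ∀ a, w f a ≠ 0)
    (hw : ∀ g, g ≠ f → Tendsto (fun a => w g a / w f a) l (𝓝 0)) :
    Tendsto (fun a => w f a / ∑ g, w g a) l (𝓝 1) := by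
  classical
  have hodds : ∀ g, Tendsto (fun a => w g a / w f a) l (𝓝 (if g = f then 1 else 0)) := by
    intro g
    split_ifs with hg
    · subst hg
      simp only [div_self (hf _), tendsto_const_nhds]
    · exact hw g hg
  have hsum : Tendsto (fun a => (∑ g, w g a) / w f a) l (𝓝 1) := by
    simpa [Finset.sum_div] using tendsto_finsetSum Finset.univ fun g _ => hodds g
  simpa using hsum.inv₀ one_ne_zero

theorem tendsto_iSup_div_sum_zero (hf : ∀ a, w f a ≠ 0) (hnonneg : ∀ g a, 0 ≤ w g a)
    (hw : ∀ g, g ≠ f → Tendsto (fun a => w g a / w f a) l (𝓝 0)) :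
    Tendsto (fun a => ⨆ g : {g : S // g ≠ f}, w g.1 a / ∑ g', w g' a) l (𝓝 0) := by
  refine tendsto_iSup_zero
    (fun g a => div_nonneg (hnonneg g a) (Finset.sum_nonneg fun g' _ => hnonneg g' a)) fun g => ?_
  simpa [div_mul_div_cancel₀ (hf _)] using (hw g g.2).mul (tendsto_div_sum_one hf hw)

end NormalizedWeights

variable {Ω : Type*} {m m0 : MeasurableSpace Ω} {μ : Measure Ω}

theorem ae_tendsto_zero_of_summable_measureReal {E : Type*} [SeminormedAddCommGroup E]
    [IsFiniteMeasure μ] {X : ℕ → Ω → E}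
    (h : ∀ ε : ℝ, 0 < ε → Summable fun n => μ.real {ω | ε ≤ ‖X n ω‖}) :
    ∀ᵐ ω ∂μ, Tendsto (fun n => X n ω) atTop (𝓝 0) := by
  have hev : ∀ k : ℕ, ∀ᵐ ω ∂μ, ∀ᶠ n in atTop, ‖X n ω‖ < 1 / ((k : ℝ) + 1) := by
    intro k
    have hsum : ∑' n, μ {ω | 1 / ((k : ℝ) + 1) ≤ ‖X n ω‖} ≠ ⊤ := by
      simpa using (h _ (Nat.one_div_pos_of_nat (n := k))).tsum_ofReal_ne_top
    filter_upwards [ae_eventually_notMem hsum] with ω hω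
    exact hω.mono fun n hn => not_le.1 hn
  filter_upwards [ae_all_iff.2 hev] with ω hω
  refine NormedAddGroup.tendsto_nhds_zero.2 fun ε hε => ?_
  obtain ⟨k, hk⟩ := exists_nat_one_div_lt hε
  exact (hω k).mono fun n hn => hn.trans hk

theorem measureReal_abs_ge_le_of_hasSubgaussianMGF {X : Ω → ℝ} {c : ℝ≥0}
    (hX : HasSubgaussianMGF X c μ) {ε : ℝ} (hε : 0 ≤ ε) :
    μ.real {ω | ε ≤ |X ω|} ≤ 2 * Real.exp (-ε ^ 2 / (2 * c)) := by
  calc μ.real {ω | ε ≤ |X ω|}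
      = μ.real ({ω | ε ≤ X ω} ∪ {ω | ε ≤ (-X) ω}) := by
        congr 1
        ext ω
        exact le_abs (a := ε) (b := X ω)
    _ ≤ μ.real {ω | ε ≤ X ω} + μ.real {ω | ε ≤ (-X) ω} := measureReal_union_le _ _
    _ ≤ 2 * Real.exp (-ε ^ 2 / (2 * c)) := by
        linarith [hX.measure_ge_le hε, hX.neg.measure_ge_le hε]

theorem ae_tendsto_div_zero_of_hasSubgaussianMGF [IsFiniteMeasure μ] {X : ℕ → Ω → ℝ} {c : ℝ≥0}
    (hc : 0 < c) (hX : ∀ n : ℕ, HasSubgaussianMGF (X n) (n * c) μ) :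
    ∀ᵐ ω ∂μ, Tendsto (fun n : ℕ => X n ω / n) atTop (𝓝 0) := by
  refine ae_tendsto_zero_of_summable_measureReal fun ε hε => ?_
  set r : ℝ := Real.exp (-ε ^ 2 / (2 * c))
  have hr : r < 1 := Real.exp_lt_one_iff.2 (div_neg_of_neg_of_pos (neg_lt_zero.2 (by positivity))
    (by positivity))
  refine Summable.of_nonneg_of_le (fun _ => measureReal_nonneg) (fun n => ?_)
    ((summable_geometric_of_lt_one (Real.exp_pos _).le hr).mul_left 2)
  rcases n.eq_zero_or_pos with rfl | hn
  · simp [hε.not_ge]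
  have hn' : (0 : ℝ) < n := Nat.cast_pos.2 hn
  calc μ.real {ω | ε ≤ ‖X n ω / n‖}
      = μ.real {ω | ε * n ≤ |X n ω|} := by
        simp only [Real.norm_eq_abs, abs_div, Nat.abs_cast, le_div_iff₀ hn']
    _ ≤ 2 * Real.exp (-(ε * n) ^ 2 / (2 * (n * c : ℝ≥0))) :=
        measureReal_abs_ge_le_of_hasSubgaussianMGF (hX n) (by positivity)
    _ = 2 * r ^ n := by
        rw [← Real.exp_nat_mul]
        congr 2
        push_cast
        field_simp

theorem integral_mul_eq_zero_of_condExp_eq_zero {Y Z : Ω → ℝ} (hm : m ≤ m0)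
    [SigmaFinite (μ.trim hm)] (hY : StronglyMeasurable[m] Y) (hYZ : Integrable (Y * Z) μ)
    (hZ : Integrable Z μ) (hcond : μ[Z | m] =ᵐ[μ] 0) : ∫ ω, Y ω * Z ω ∂μ = 0 := by
  have hpull : μ[Y * Z | m] =ᵐ[μ] 0 := by
    filter_upwards [condExp_mul_of_stronglyMeasurable_left hY hYZ hZ, hcond] with ω hω hzero
    rw [hω, Pi.mul_apply, hzero, Pi.zero_apply, mul_zero]
  calc ∫ ω, Y ω * Z ω ∂μ = ∫ ω, (μ[Y * Z | m]) ω ∂μ := (integral_condExp hm).symm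
    _ = 0 := integral_eq_zero_of_ae hpull

theorem hasSubgaussianMGF_add_of_condExp_eq_zero [IsFiniteMeasure μ] {X D : Ω → ℝ} {c R : ℝ≥0}
    (hm : m ≤ m0) (hX : HasSubgaussianMGF X c μ) (hXm : StronglyMeasurable[m] X)
    (hD : Integrable D μ) (hDR : ∀ᵐ ω ∂μ, |D ω| ≤ R) (hcond : μ[D | m] =ᵐ[μ] 0) :
    HasSubgaussianMGF (X + D) (c + R ^ 2) μ := by
  have hmul : ∀ t, Integrable (fun ω => Real.exp (t * X ω) * D ω) μ := fun t =>
    (hX.integrable_exp_mul t).mul_bdd hD.aestronglyMeasurable hDR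
  have hcentred : ∀ t, ∫ ω, Real.exp (t * X ω) * D ω ∂μ = 0 := fun t =>
    integral_mul_eq_zero_of_condExp_eq_zero hm
      (Real.continuous_exp.comp_stronglyMeasurable (hXm.const_mul t)) (hmul t) hD hcond
  have hbound : ∀ t, ∀ᵐ ω ∂μ, Real.exp (t * (X + D) ω) ≤
      Real.cosh (t * R) * Real.exp (t * X ω) +
        Real.sinh (t * R) / R * (Real.exp (t * X ω) * D ω) := fun t =>
    hDR.mono fun ω hω => exp_mul_add_le_cosh_mul_add_sinh_div_mul hω (X ω) t
  have hdom : ∀ t, Integrable (fun ω => Real.cosh (t * R) * Real.exp (t * X ω) +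
      Real.sinh (t * R) / R * (Real.exp (t * X ω) * D ω)) μ := fun t =>
    ((hX.integrable_exp_mul t).const_mul _).add ((hmul t).const_mul _)
  have hint : ∀ t, Integrable (fun ω => Real.exp (t * (X + D) ω)) μ := by
    intro t
    refine (hdom t).mono' ?_ ?_
    · exact Real.continuous_exp.comp_aestronglyMeasurable
        ((hX.aestronglyMeasurable.add hD.aestronglyMeasurable).const_mul t)
    · simpa only [Real.norm_eq_abs, Real.abs_exp] using hbound t
  refine ⟨hint, fun t => ?_⟩
  calc mgf (X + D) μ t
      ≤ ∫ ω, (Real.cosh (t * R) * Real.exp (t * X ω) +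
          Real.sinh (t * R) / R * (Real.exp (t * X ω) * D ω)) ∂μ :=
        integral_mono_ae (hint t) (hdom t) (hbound t)
    _ = Real.cosh (t * R) * mgf X μ t := by
        rw [integral_add ((hX.integrable_exp_mul t).const_mul _) ((hmul t).const_mul _),
          integral_const_mul, integral_const_mul, hcentred, mul_zero, add_zero, mgf]
    _ ≤ Real.exp ((t * R) ^ 2 / 2) * Real.exp (c * t ^ 2 / 2) := by
        gcongr
        · exact mgf_nonneg
        · exact Real.cosh_le_exp_half_sq _
        · exact hX.mgf_le t
    _ = Real.exp ((c + R ^ 2 : ℝ≥0) * t ^ 2 / 2) := by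
        rw [← Real.exp_add]
        congr 1
        push_cast
        ring

section Martingale

variable [IsProbabilityMeasure μ] {ℱ : Filtration ℕ m0}

/-- **Azuma–Hoeffding inequality**, in sub-Gaussian form. -/
theorem hasSubgaussianMGF_sub_zero_of_martingale {M : ℕ → Ω → ℝ} {R : ℝ≥0}
    (hM : Martingale M ℱ μ) (hbdd : ∀ᵐ ω ∂μ, ∀ n, |M (n + 1) ω - M n ω| ≤ R) (n : ℕ) :
    HasSubgaussianMGF (M n - M 0) (n * R ^ 2) μ := by
  induction n with
  | zero => simp
  | succ n ih =>
    have hcond : μ[M (n + 1) - M n | ℱ n] =ᵐ[μ] 0 := by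
      filter_upwards [condExp_sub (hM.integrable (n + 1)) (hM.integrable n) (ℱ n),
        hM.condExp_ae_eq n.le_succ, hM.condExp_ae_eq le_rfl] with ω hsub hsucc hself
      rw [hsub, Pi.sub_apply, hsucc, hself, sub_self, Pi.zero_apply]
    have hstep := hasSubgaussianMGF_add_of_condExp_eq_zero (ℱ.le n) ih
      ((hM.stronglyMeasurable n).sub ((hM.stronglyMeasurable 0).mono (ℱ.mono n.zero_le)))
      ((hM.integrable (n + 1)).sub (hM.integrable n)) (hbdd.mono fun ω hω => hω n) hcond
    convert hstep using 1
    · abel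
    · push_cast
      ring

theorem ae_tendsto_div_zero_of_martingale {M : ℕ → Ω → ℝ} {R : ℝ} (hM : Martingale M ℱ μ)
    (hbdd : ∀ᵐ ω ∂μ, ∀ n, |M (n + 1) ω - M n ω| ≤ R) :
    ∀ᵐ ω ∂μ, Tendsto (fun n : ℕ => M n ω / n) atTop (𝓝 0) := by
  have hbdd' : ∀ᵐ ω ∂μ, ∀ n, |M (n + 1) ω - M n ω| ≤ (R.toNNReal + 1 : ℝ≥0) := by
    filter_upwards [hbdd] with ω hω n
    push_cast
    linarith [hω n, Real.le_coe_toNNReal R]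
  filter_upwards [ae_tendsto_div_zero_of_hasSubgaussianMGF (by positivity)
    (hasSubgaussianMGF_sub_zero_of_martingale hM hbdd')] with ω hω
  simpa [← add_div] using hω.add (tendsto_const_div_atTop_nhds_zero_nat (M 0 ω))

theorem ae_tendsto_average_sub_condExp_zero {X : ℕ → Ω → ℝ} {R : ℝ}
    (hX : ∀ n, Measurable[ℱ (n + 1)] (X n)) (hbdd : ∀ᵐ ω ∂μ, ∀ n, |X n ω| ≤ R) :
    ∀ᵐ ω ∂μ, Tendsto (fun n : ℕ =>
      (∑ s ∈ Finset.range n, (X s ω - (μ[X s | ℱ s]) ω)) / n) atTop (𝓝 0) := by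
  set P : ℕ → Ω → ℝ := fun n => ∑ s ∈ Finset.range n, X s
  have hincr : ∀ n, P (n + 1) - P n = X n := fun n => Finset.sum_range_succ_sub_sum X
  have hadapted : StronglyAdapted ℱ P := fun n =>
    Finset.stronglyMeasurable_sum _ fun s hs =>
      ((hX s).mono (ℱ.mono (Finset.mem_range.1 hs)) le_rfl).stronglyMeasurable
  have hint : ∀ n, Integrable (P n) μ := fun n => integrable_finsetSum' _ fun s _ =>
    Integrable.of_bound ((hX s).mono (ℱ.le _) le_rfl).aestronglyMeasurable R
      (hbdd.mono fun ω hω => hω s)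
  have hPbdd : ∀ᵐ ω ∂μ, ∀ n, ‖P (n + 1) ω - P n ω‖ ≤ R := by
    filter_upwards [hbdd] with ω hω n
    rw [← Pi.sub_apply, hincr]
    exact hω n
  filter_upwards [ae_tendsto_div_zero_of_martingale (martingale_martingalePart hadapted hint)
    (martingalePart_bdd_difference ℱ hPbdd)] with ω hω
  simpa [martingalePart_eq_sum, hincr, P] using hω

theorem ae_tendsto_prod_div_prod_zero {a b : ℕ → Ω → ℝ} {L : ℝ}
    (ha : ∀ s, Measurable[ℱ (s + 1)] (a s)) (hb : ∀ s, Measurable[ℱ (s + 1)] (b s))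
    (ha_pos : ∀ s ω, 0 < a s ω) (hb_pos : ∀ s ω, 0 < b s ω)
    (hL : ∀ s ω, |Real.log (a s ω / b s ω)| ≤ L)
    (hKL : ∀ᵐ ω ∂μ, 0 < atTop.liminf fun T : ℕ => (1 / (T : ℝ)) * ∑ s ∈ Finset.range T,
      (μ[fun ω' => Real.log (a s ω' / b s ω') | ℱ s]) ω) :
    ∀ᵐ ω ∂μ, Tendsto (fun n => (∏ s ∈ Finset.range n, b s ω) / ∏ s ∈ Finset.range n, a s ω)
      atTop (𝓝 0) := by
  filter_upwards [hKL, ae_tendsto_average_sub_condExp_zero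
    (fun s => Real.measurable_log.comp ((ha s).div (hb s)))
    (ae_of_all μ fun ω s => hL s ω)] with ω hliminf hcentred
  exact tendsto_prod_div_prod_zero (ha_pos · ω) (hb_pos · ω)
    (tendsto_sum_atTop_of_liminf_average_pos hcentred hliminf)

end Martingale

theorem abs_log_div_le_neg_log {a b ν : ℝ} (hν : 0 < ν) (ha : a ∈ Set.Icc ν 1)
    (hb : b ∈ Set.Icc ν 1) : |Real.log (a / b)| ≤ -Real.log ν := by
  have ha0 : 0 < a := hν.trans_le ha.1
  have hb0 : 0 < b := hν.trans_le hb.1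
  rw [Real.log_div ha0.ne' hb0.ne', abs_le]
  constructor <;>
    linarith [Real.log_le_log hν ha.1, Real.log_le_log hν hb.1, Real.log_nonpos ha0.le ha.2,
      Real.log_nonpos hb0.le hb.2]

theorem posterior_concentration_KL_general [IsProbabilityMeasure μ] (ℱ : Filtration ℕ m0)
    {S : Type*} [Fintype S] (f : S) (π₀ : S → ℝ) (hπ₀ : ∀ g, 0 < π₀ g) (ℓ : S → ℕ → Ω → ℝ)
    (hmeas : ∀ g s, Measurable[ℱ (s + 1)] (ℓ g s)) (hpos : ∀ g s ω, 0 < ℓ g s ω)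
    (L : S → ℝ) (hL : ∀ g s ω, |Real.log (ℓ f s ω / ℓ g s ω)| ≤ L g)
    (hKL : ∀ g, g ≠ f → ∀ᵐ ω ∂μ,
      0 < atTop.liminf fun T : ℕ =>
        (1 / (T : ℝ)) * ∑ s ∈ Finset.range T,
          (μ[fun ω' => Real.log (ℓ f s ω' / ℓ g s ω') | ℱ s]) ω) :
    ∀ᵐ ω ∂μ,
      Tendsto (fun t : ℕ =>
          (π₀ f * ∏ s ∈ Finset.range t, ℓ f s ω) /
            ∑ g', π₀ g' * ∏ s ∈ Finset.range t, ℓ g' s ω)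
        atTop (𝓝 1) ∧
      Tendsto (fun t : ℕ =>
          ⨆ g : {g : S // g ≠ f},
            (π₀ g.1 * ∏ s ∈ Finset.range t, ℓ g.1 s ω) /
              ∑ g', π₀ g' * ∏ s ∈ Finset.range t, ℓ g' s ω)
        atTop (𝓝 0) := by
  have hratio : ∀ᵐ ω ∂μ, ∀ g, g ≠ f → Tendsto (fun t =>
      (∏ s ∈ Finset.range t, ℓ g s ω) / ∏ s ∈ Finset.range t, ℓ f s ω) atTop (𝓝 0) := by
    simp only [eventually_all]
    exact fun g hg => ae_tendsto_prod_div_prod_zero (hmeas f) (hmeas g) (hpos f) (hpos g)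
      (hL g) (hKL g hg)
  filter_upwards [hratio] with ω hω
  let w : S → ℕ → ℝ := fun g t => π₀ g * ∏ s ∈ Finset.range t, ℓ g s ω
  have hw_pos : ∀ g t, 0 < w g t := fun g t =>
    mul_pos (hπ₀ g) (Finset.prod_pos fun s _ => hpos g s ω)
  have hodds : ∀ g, g ≠ f → Tendsto (fun t => w g t / w f t) atTop (𝓝 0) := by
    intro g hg
    simpa only [w, mul_div_mul_comm, mul_zero] using (hω g hg).const_mul (π₀ g / π₀ f)
  exact ⟨tendsto_div_sum_one (fun t => (hw_pos f t).ne') hodds,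
    tendsto_iSup_div_sum_zero (fun t => (hw_pos f t).ne') (fun g t => (hw_pos g t).le) hodds⟩

end

/-- **Posterior concentration on a finite cautious hypothesis menu under on-path
KL separation.** Here `ℓ g s ω` is the probability the menu hypothesis `g` assigns
to the realized period-`s` observation, `f` is the true hypothesis, and the liminf
hypothesis is the on-path KL-separation condition. The Bayes posterior over the
menu concentrates on `f` almost surely; equivalently, the maximum posterior mass
on wrong hypotheses vanishes. -/
theorem posterior_concentration_KL {Ω : Type*} [m0 : MeasurableSpace Ω]
    (μ : Measure Ω) [IsProbabilityMeasure μ]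
    (F : ℕ → MeasurableSpace Ω) (hF_le : ∀ s, F s ≤ m0) (hF_mono : ∀ s, F s ≤ F (s + 1))
    {S : Type*} [Fintype S] [Nonempty S] (f : S)
    (π₀ : S → ℝ) (hπ₀ : ∀ g, 0 < π₀ g) (hπ₀sum : ∑ g, π₀ g = 1)
    (ν : ℝ) (hν : ν ∈ Set.Ioo (0 : ℝ) 1)
    (ℓ : S → ℕ → Ω → ℝ)
    (hmeas : ∀ g s, Measurable[F (s + 1)] (ℓ g s))
    (hbound : ∀ g s ω, ℓ g s ω ∈ Set.Icc ν 1)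
    (hKL : ∀ g, g ≠ f → ∃ κ > (0 : ℝ), ∀ᵐ ω ∂μ,
      κ ≤ atTop.liminf fun T : ℕ =>
        (1 / (T : ℝ)) * ∑ s ∈ Finset.range T,
          (μ[fun ω' => Real.log (ℓ f s ω' / ℓ g s ω') | F s]) ω) :
    ∀ᵐ ω ∂μ,
      Tendsto (fun t : ℕ =>
          (π₀ f * ∏ s ∈ Finset.range t, ℓ f s ω) /
            ∑ g', π₀ g' * ∏ s ∈ Finset.range t, ℓ g' s ω)
        atTop (nhds 1) ∧
      Tendsto (fun t : ℕ =>
          ⨆ g : {g : S // g ≠ f},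
            (π₀ g.1 * ∏ s ∈ Finset.range t, ℓ g.1 s ω) /
              ∑ g', π₀ g' * ∏ s ∈ Finset.range t, ℓ g' s ω)
        atTop (nhds 0) := by
  refine posterior_concentration_KL_general ⟨F, monotone_nat_of_le_succ hF_mono, hF_le⟩ f π₀ hπ₀ ℓ
    hmeas (fun g s ω => hν.1.trans_le (hbound g s ω).1) (fun _ => -Real.log ν)
    (fun g s ω => abs_log_div_le_neg_log hν.1 (hbound f s ω) (hbound g s ω)) fun g hg => ?_
  obtain ⟨κ, hκ, hliminf⟩ := hKL g hg
  exact hliminf.mono fun ω hω => hκ.trans_le hω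
end

section
/- Let (Ω, 𝒜, μ) be a probability space and 𝔉 : ℕ → sub-σ-algebras of 𝒜 a filtration (𝔉 s ⊆ 𝔉 (s+1) for all s). Let c ≥ 0 and let Y : ℕ → Ω → ℝ be a sequence of random variables such that for every s: Y s is 𝔉(s+1)-measurable, |Y s ω| ≤ c for all ω, and μ[ Y s | 𝔉 s ] = 0 μ-almost everywhere. Then μ-almost surely, (1/T) ∑_{s=0}^{T−1} Y s ω → 0 as T → ∞. (Cesàro averages of a uniformly bounded martingale difference sequence converge to zero almost surely; this follows from the Azuma–Hoeffding inequality and the Borel–Cantelli lemma.) -/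
open MeasureTheory Filter

/-!
Divide the differences by a norming sequence `b` increasing to infinity. By orthogonality the
martingale `∑ Yₛ / bₛ` is bounded in `L²` as soon as `∑ E[Yₛ²] / bₛ²` is finite, so it converges
almost surely, and Kronecker's lemma turns this into `∑_{s ≤ n} Yₛ = o(bₙ)`. For bounded `Y` take
`bₛ = s + 1`.
-/

section Kronecker

open Asymptotics Finset

variable {E : Type*} [NormedAddCommGroup E] [NormedSpace ℝ E] {b : ℕ → ℝ} {l : E}

theorem sum_range_succ_smul_sub {R M : Type*} [Ring R] [AddCommGroup M] [Module R M]
    (b : ℕ → R) (u : ℕ → M) (n : ℕ) :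
    ∑ i ∈ range (n + 1), b i • (u (i + 1) - u i) =
      b n • u (n + 1) - b 0 • u 0 - ∑ i ∈ range n, (b (i + 1) - b i) • u (i + 1) := by
  induction n with
  | zero => simp [smul_sub]
  | succ n ih =>
    rw [sum_range_succ, ih, sum_range_succ _ n]
    simp only [sub_smul, smul_sub]
    abel

theorem isLittleO_sum_range_sub_smul (hb_mono : Monotone b) (hb : Tendsto b atTop atTop)
    {u : ℕ → E} (hu : Tendsto u atTop (nhds 0)) :
    (fun n => ∑ i ∈ range n, (b (i + 1) - b i) • u i) =o[atTop] b := by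
  have hterm : (fun i => (b (i + 1) - b i) • u i) =o[atTop] fun i => b (i + 1) - b i := by
    simpa using (isBigO_refl (fun i => b (i + 1) - b i) atTop).smul_isLittleO
      ((isLittleO_one_iff ℝ).2 hu)
  have hsum : Tendsto (fun n => ∑ i ∈ range n, (b (i + 1) - b i)) atTop atTop := by
    simpa only [sum_range_sub, ← sub_eq_add_neg] using
      tendsto_atTop_add_const_right atTop (-b 0) hb
  have hweights : (fun n => ∑ i ∈ range n, (b (i + 1) - b i)) =O[atTop] b := by
    simp only [sum_range_sub]
    exact (isBigO_refl b atTop).sub (isLittleO_const_left.2 <| .inr <|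
      tendsto_norm_atTop_atTop.comp hb).isBigO
  exact (hterm.sum_range (fun i => sub_nonneg.2 (hb_mono i.le_succ)) hsum).trans_isBigO hweights

theorem isLittleO_sum_range_succ_smul_sub (hb_mono : Monotone b) (hb : Tendsto b atTop atTop)
    {u : ℕ → E} (hu : Tendsto u atTop (nhds l)) :
    (fun n => ∑ i ∈ range (n + 1), b i • (u (i + 1) - u i)) =o[atTop] b := by
  have hv : Tendsto (fun n => u (n + 1) - l) atTop (nhds 0) :=
    tendsto_sub_nhds_zero_iff.2 (hu.comp (tendsto_add_atTop_nat 1))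
  have hlast : (fun n => b n • (u (n + 1) - l)) =o[atTop] b := by
    simpa using (isBigO_refl b atTop).smul_isLittleO ((isLittleO_one_iff ℝ).2 hv)
  have hfirst : (fun _ => b 0 • (u 0 - l)) =o[atTop] b :=
    isLittleO_const_left.2 <| .inr <| tendsto_norm_atTop_atTop.comp hb
  refine ((hlast.sub hfirst).sub (isLittleO_sum_range_sub_smul hb_mono hb hv)).congr_left
    fun n => ?_
  rw [← sum_range_succ_smul_sub b (fun i => u i - l)]
  simp only [sub_sub_sub_cancel_right]

/-- **Kronecker's lemma** -/
theorem isLittleO_sum_range_succ_of_tendsto_sum_inv_smul (hb_ne : ∀ n, b n ≠ 0)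
    (hb_mono : Monotone b) (hb : Tendsto b atTop atTop) {x : ℕ → E}
    (hx : Tendsto (fun n => ∑ i ∈ range n, (b i)⁻¹ • x i) atTop (nhds l)) :
    (fun n => ∑ i ∈ range (n + 1), x i) =o[atTop] b := by
  simpa only [sum_range_succ_sub_sum, smul_inv_smul₀ (hb_ne _)] using
    isLittleO_sum_range_succ_smul_sub hb_mono hb hx

end Kronecker

section MartingaleDifference

open Finset

variable {Ω E : Type*} {m0 : MeasurableSpace Ω} {μ : Measure Ω} {ℱ : Filtration ℕ m0}
  [NormedAddCommGroup E] [NormedSpace ℝ E]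

/-- `Y` is a martingale difference sequence with respect to the filtration `ℱ`, indexed so that
`Y n` is the increment of a martingale from time `n` to time `n + 1`. Integrability is part of the
definition because `μ[Y n | ℱ n]` is `0` by convention when `Y n` is not integrable. -/
structure IsMartingaleDifference (Y : ℕ → Ω → E) (ℱ : Filtration ℕ m0) (μ : Measure Ω) :
    Prop where
  stronglyMeasurable : ∀ n, StronglyMeasurable[ℱ (n + 1)] (Y n)
  integrable : ∀ n, Integrable (Y n) μ
  condExp_eq_zero : ∀ n, μ[Y n | ℱ n] =ᵐ[μ] 0

theorem eLpNorm_one_le_measureReal_univ_add_integral_sq [IsFiniteMeasure μ] {f : Ω → ℝ}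
    (hf : MemLp f 2 μ) :
    eLpNorm f 1 μ ≤ ENNReal.ofReal (μ.real Set.univ + ∫ ω, f ω ^ 2 ∂μ) := by
  have hint : Integrable f μ := hf.integrable one_le_two
  rw [eLpNorm_one_eq_lintegral_enorm, ← ofReal_integral_norm_eq_lintegral_enorm hint]
  refine ENNReal.ofReal_le_ofReal ?_
  calc ∫ ω, ‖f ω‖ ∂μ ≤ ∫ ω, (1 + f ω ^ 2) ∂μ := by
        refine integral_mono hint.norm ((integrable_const 1).add hf.integrable_sq) fun ω => ?_
        dsimp only
        rw [Real.norm_eq_abs, ← sq_abs]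
        nlinarith [sq_nonneg (|f ω| - 1), abs_nonneg (f ω)]
    _ = μ.real Set.univ + ∫ ω, f ω ^ 2 ∂μ := by
        rw [integral_add (integrable_const 1) hf.integrable_sq]
        simp

namespace IsMartingaleDifference

theorem const_smul [CompleteSpace E] {Y : ℕ → Ω → E} (hY : IsMartingaleDifference Y ℱ μ)
    (a : ℕ → ℝ) : IsMartingaleDifference (fun n => a n • Y n) ℱ μ where
  stronglyMeasurable n := (hY.stronglyMeasurable n).const_smul (a n)
  integrable n := (hY.integrable n).smul (a n)
  condExp_eq_zero n := by
    filter_upwards [condExp_smul (a n) (Y n) (ℱ n), hY.condExp_eq_zero n] with ω hsmul hzero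
    simp [hsmul, hzero]

theorem stronglyAdapted_sum {Y : ℕ → Ω → E} (hY : IsMartingaleDifference Y ℱ μ) :
    StronglyAdapted ℱ fun n => ∑ i ∈ range n, Y i := fun _ =>
  Finset.stronglyMeasurable_sum _ fun i hi =>
    (hY.stronglyMeasurable i).mono (ℱ.mono (mem_range.1 hi))

theorem martingale_sum [CompleteSpace E] [IsFiniteMeasure μ] {Y : ℕ → Ω → E}
    (hY : IsMartingaleDifference Y ℱ μ) :
    Martingale (fun n => ∑ i ∈ range n, Y i) ℱ μ :=
  martingale_of_condExp_sub_eq_zero_nat hY.stronglyAdapted_sum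
    (fun _ => integrable_finsetSum' _ fun i _ => hY.integrable i)
    fun n => by simpa only [sum_range_succ_sub_sum] using hY.condExp_eq_zero n

variable {Y : ℕ → Ω → ℝ}

theorem integral_mul_eq_zero [SigmaFiniteFiltration μ ℱ] (hY : IsMartingaleDifference Y ℱ μ)
    {n : ℕ} {X : Ω → ℝ} (hX : StronglyMeasurable[ℱ n] X) (hXY : Integrable (X * Y n) μ) :
    ∫ ω, X ω * Y n ω ∂μ = 0 := by
  have hcond : μ[X * Y n | ℱ n] =ᵐ[μ] 0 := by
    filter_upwards [condExp_mul_of_stronglyMeasurable_left hX hXY (hY.integrable n),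
      hY.condExp_eq_zero n] with ω hpull hzero
    simp [hpull, hzero]
  calc ∫ ω, X ω * Y n ω ∂μ = ∫ ω, (μ[X * Y n | ℱ n]) ω ∂μ := (integral_condExp (ℱ.le n)).symm
    _ = 0 := integral_eq_zero_of_ae hcond

theorem integral_sum_sq [SigmaFiniteFiltration μ ℱ] (hY : IsMartingaleDifference Y ℱ μ)
    (hY_memLp : ∀ n, MemLp (Y n) 2 μ) (n : ℕ) :
    ∫ ω, (∑ i ∈ range n, Y i) ω ^ 2 ∂μ = ∑ i ∈ range n, ∫ ω, Y i ω ^ 2 ∂μ := by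
  induction n with
  | zero => simp
  | succ n ih =>
    set S := ∑ i ∈ range n, Y i with hS
    have hS_memLp : MemLp S 2 μ := memLp_finsetSum' _ fun i _ => hY_memLp i
    have hSY : Integrable (S * Y n) μ := hS_memLp.integrable_mul (hY_memLp n)
    have hcross : ∫ ω, S ω * Y n ω ∂μ = 0 :=
      hY.integral_mul_eq_zero (hY.stronglyAdapted_sum n) hSY
    calc ∫ ω, (∑ i ∈ range (n + 1), Y i) ω ^ 2 ∂μ
        = ∫ ω, (S ω ^ 2 + 2 * (S ω * Y n ω) + Y n ω ^ 2) ∂μ := by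
          simp only [sum_range_succ, ← hS, Pi.add_apply, add_sq, mul_assoc]
      _ = ∫ ω, S ω ^ 2 ∂μ + 2 * ∫ ω, S ω * Y n ω ∂μ + ∫ ω, Y n ω ^ 2 ∂μ := by
          have hSY2 : Integrable (fun ω => 2 * (S ω * Y n ω)) μ := hSY.const_mul 2
          have hSS : Integrable (fun ω => S ω ^ 2 + 2 * (S ω * Y n ω)) μ :=
            hS_memLp.integrable_sq.add hSY2
          rw [integral_add hSS (hY_memLp n).integrable_sq,
            integral_add hS_memLp.integrable_sq hSY2, integral_const_mul]
      _ = ∑ i ∈ range (n + 1), ∫ ω, Y i ω ^ 2 ∂μ := by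
          rw [hcross, ih, sum_range_succ, mul_zero, add_zero]

variable [IsFiniteMeasure μ]

theorem exists_ae_tendsto_sum (hY : IsMartingaleDifference Y ℱ μ)
    (hY_memLp : ∀ n, MemLp (Y n) 2 μ) (hsum : Summable fun n => ∫ ω, Y n ω ^ 2 ∂μ) :
    ∀ᵐ ω ∂μ, ∃ l, Tendsto (fun n => ∑ i ∈ range n, Y i ω) atTop (nhds l) := by
  have hbound : ∀ n, eLpNorm (∑ i ∈ range n, Y i) 1 μ ≤
      (μ.real Set.univ + ∑' i, ∫ ω, Y i ω ^ 2 ∂μ).toNNReal := fun n => by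
    refine (eLpNorm_one_le_measureReal_univ_add_integral_sq
      (memLp_finsetSum' _ fun i _ => hY_memLp i)).trans (ENNReal.ofReal_le_ofReal ?_)
    rw [hY.integral_sum_sq hY_memLp]
    gcongr
    exact hsum.sum_le_tsum _ fun i _ => integral_nonneg fun ω => sq_nonneg _
  simpa only [Finset.sum_apply] using
    hY.martingale_sum.submartingale.exists_ae_tendsto_of_bdd hbound

theorem ae_isLittleO_sum (hY : IsMartingaleDifference Y ℱ μ) (hY_memLp : ∀ n, MemLp (Y n) 2 μ)
    {b : ℕ → ℝ} (hb_ne : ∀ n, b n ≠ 0) (hb_mono : Monotone b) (hb : Tendsto b atTop atTop)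
    (hsum : Summable fun n => (∫ ω, Y n ω ^ 2 ∂μ) / b n ^ 2) :
    ∀ᵐ ω ∂μ, (fun n => ∑ i ∈ range (n + 1), Y i ω) =o[atTop] b := by
  have hscaled : Summable fun n => ∫ ω, ((b n)⁻¹ • Y n) ω ^ 2 ∂μ := by
    simpa only [Pi.smul_apply, smul_eq_mul, inv_mul_eq_div, div_pow, integral_div] using hsum
  filter_upwards [(hY.const_smul fun n => (b n)⁻¹).exists_ae_tendsto_sum
    (fun n => (hY_memLp n).const_smul _) hscaled] with ω ⟨l, hl⟩
  exact isLittleO_sum_range_succ_of_tendsto_sum_inv_smul hb_ne hb_mono hb hl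

end IsMartingaleDifference

theorem summable_integral_sq_div_of_bound [IsFiniteMeasure μ] {Y : ℕ → Ω → ℝ} {c : ℝ}
    (hbdd : ∀ s, ∀ᵐ ω ∂μ, |Y s ω| ≤ c) :
    Summable fun s : ℕ => (∫ ω, Y s ω ^ 2 ∂μ) / ((s : ℝ) + 1) ^ 2 := by
  have hsq : ∀ s, ∫ ω, Y s ω ^ 2 ∂μ ≤ c ^ 2 * μ.real Set.univ := fun s =>
    (Real.le_norm_self _).trans <| norm_integral_le_of_norm_le_const <| by
      filter_upwards [hbdd s] with ω hω
      simpa using pow_le_pow_left₀ (abs_nonneg _) hω 2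
  have hinv : Summable fun s : ℕ => c ^ 2 * μ.real Set.univ / ((s : ℝ) + 1) ^ 2 := by
    have hshift := (summable_nat_add_iff 1).2 (Real.summable_one_div_nat_pow.2 one_lt_two)
    simpa only [Nat.cast_add, Nat.cast_one, mul_one_div] using
      hshift.mul_left (c ^ 2 * μ.real Set.univ)
  refine hinv.of_nonneg_of_le (fun s => ?_) fun s => by gcongr; exact hsq s
  exact div_nonneg (integral_nonneg fun ω => sq_nonneg _) (sq_nonneg _)

theorem bounded_mds_cesaro_to_zero_general [IsFiniteMeasure μ] {Y : ℕ → Ω → ℝ}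
    (hY : IsMartingaleDifference Y ℱ μ) (hY_memLp : ∀ s, MemLp (Y s) 2 μ)
    (hsum : Summable fun s : ℕ => (∫ ω, Y s ω ^ 2 ∂μ) / ((s : ℝ) + 1) ^ 2) :
    ∀ᵐ ω ∂μ,
      Tendsto (fun T : ℕ => (1 / (T : ℝ)) * ∑ s ∈ range T, Y s ω) atTop (nhds 0) := by
  have hb_mono : Monotone fun n : ℕ => (n : ℝ) + 1 := Nat.mono_cast.add_const 1
  have hb : Tendsto (fun n : ℕ => (n : ℝ) + 1) atTop atTop :=
    tendsto_atTop_add_const_right _ 1 tendsto_natCast_atTop_atTop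
  filter_upwards [hY.ae_isLittleO_sum hY_memLp (fun n => n.cast_add_one_ne_zero) hb_mono hb hsum]
    with ω hω
  refine (tendsto_add_atTop_iff_nat 1).1 ?_
  simpa only [Nat.cast_add, Nat.cast_one, one_div_mul_eq_div] using hω.tendsto_div_nhds_zero

end MartingaleDifference

/-- **Cesàro averages of a uniformly bounded martingale difference sequence
converge to zero almost surely** (via Azuma–Hoeffding and Borel–Cantelli). -/
theorem bounded_mds_cesaro_to_zero {Ω : Type*} [m0 : MeasurableSpace Ω]
    (μ : Measure Ω) [IsProbabilityMeasure μ]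
    (F : ℕ → MeasurableSpace Ω) (hF_le : ∀ s, F s ≤ m0) (hF_mono : ∀ s, F s ≤ F (s + 1))
    (c : ℝ) (hc : 0 ≤ c) (Y : ℕ → Ω → ℝ)
    (hmeas : ∀ s, Measurable[F (s + 1)] (Y s))
    (hbdd : ∀ s ω, |Y s ω| ≤ c)
    (hmds : ∀ s, μ[Y s | F s] =ᵐ[μ] 0) :
    ∀ᵐ ω ∂μ,
      Tendsto (fun T : ℕ => (1 / (T : ℝ)) * ∑ s ∈ Finset.range T, Y s ω)
        atTop (nhds 0) := by
  let ℱ : Filtration ℕ m0 := ⟨F, monotone_nat_of_le_succ hF_mono, hF_le⟩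
  have hY_memLp : ∀ p s, MemLp (Y s) p μ := fun p s =>
    .of_bound ((hmeas s).mono (hF_le _) le_rfl).aestronglyMeasurable c (ae_of_all _ (hbdd s))
  have hY : IsMartingaleDifference Y ℱ μ :=
    ⟨fun s => (hmeas s).stronglyMeasurable, fun s => (hY_memLp 1 s).integrable le_rfl, hmds⟩
  exact bounded_mds_cesaro_to_zero_general hY (hY_memLp 2)
    (summable_integral_sq_div_of_bound fun s => ae_of_all _ (hbdd s))
end

section
/- Let A be a nonempty finite type, equip A with the discrete σ-algebra and ℕ → A with the product σ-algebra. For probability measures μ, ν on ℕ → A define the weak distance d(μ,ν) := ∑_{t=1}^{∞} 2^{−t} · sup{ |μ E − ν E| : E measurable with respect to the σ-algebra generated by the coordinate projections z ↦ z s for s < t }. Fix λ ∈ (0,1) and u : A → ℝ with 0 ≤ u a ≤ 1 for all a ∈ A, and define the normalized discounted payoff U(μ) := ∫ (1−λ) ∑_{t=0}^{∞} λ^t · u(z t) dμ(z). Then for every δ > 0 there exists ρ > 0 such that for all probability measures μ, ν on ℕ → A: d(μ,ν) ≤ ρ implies |U(μ) − U(ν)| ≤ δ. (Continuity of the normalized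 discounted payoff with respect to the weak distance on play-path distributions.) -/
open MeasureTheory Filter

/-- The σ-algebra on play paths `ℕ → A` generated by the coordinate projections
`z ↦ z s` for `s < t`. -/
def cylinderAlg (A : Type*) [MeasurableSpace A] (t : ℕ) : MeasurableSpace (ℕ → A) :=
  ⨆ s ∈ Finset.range t, MeasurableSpace.comap (fun z : ℕ → A => z s) inferInstance

/-- The weak distance between two play-path distributions:
`d(μ,ν) := ∑_{t=1}^∞ 2^{-t} ⋅ sup { |μ E - ν E| : E ∈ 𝓑^t }`, where `𝓑^t` is the
σ-algebra generated by the first `t` coordinate projections. -/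
noncomputable def weakDist {A : Type*} [MeasurableSpace A]
    (μ ν : Measure (ℕ → A)) : ℝ :=
  ∑' t : ℕ, (2 : ℝ)⁻¹ ^ (t + 1) *
    ⨆ E : {E : Set (ℕ → A) // MeasurableSet[cylinderAlg A (t + 1)] E},
      |(μ E.1).toReal - (ν E.1).toReal|

/-!
Write `d` for `weakDist`. Splitting the payoff after `N ≥ 1` stages gives
`U(z) = U_N(z) + L ^ N * U(shiftᴺ z)`, where `U_N` depends on the first `N` coordinates only.
For a function with values in `[a, b]`, the layer-cake formula bounds the difference of its
integrals by `b - a` times the largest discrepancy of the two measures on its superlevel sets. For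
`U_N` these sets are cylinders, where the discrepancy is at most `2 ^ N * d(μ, ν)`, and for the tail
the trivial discrepancy `1` suffices. Hence `|U(μ) - U(ν)| ≤ (b - a) (2 ^ N d(μ, ν) + L ^ N)`.
-/

section IntegralDiscrepancy

variable {Ω : Type*} {m mΩ : MeasurableSpace Ω} {μ ν : Measure Ω} {f : Ω → ℝ} {a b c : ℝ}

lemma abs_measureReal_sub_le_one [IsProbabilityMeasure μ] [IsProbabilityMeasure ν] (E : Set Ω) :
    |μ.real E - ν.real E| ≤ 1 := by
  simpa only [sub_zero] using abs_sub_le_of_le_of_le (measureReal_nonneg (μ := μ) (s := E))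
    measureReal_le_one (measureReal_nonneg (μ := ν)) measureReal_le_one

lemma abs_integral_sub_integral_le_of_superlevel [IsFiniteMeasure μ] [IsFiniteMeasure ν]
    (hb : 0 ≤ b) (hf : Measurable f) (hfb : ∀ x, f x ∈ Set.Icc 0 b)
    (hc : ∀ t, |μ.real {x | t ≤ f x} - ν.real {x | t ≤ f x}| ≤ c) :
    |(∫ x, f x ∂μ) - ∫ x, f x ∂ν| ≤ b * c := by
  have layer_cake (κ : Measure Ω) [IsFiniteMeasure κ] :
      ∫ x, f x ∂κ = ∫ t in Set.Ioc 0 b, κ.real {x | t ≤ f x} :=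
    (Integrable.of_mem_Icc 0 b hf.aemeasurable (.of_forall hfb)).integral_eq_integral_Ioc_meas_le
      (.of_forall fun x => (hfb x).1) (.of_forall fun x => (hfb x).2)
  have integrable_superlevel (κ : Measure Ω) [IsFiniteMeasure κ] :
      IntegrableOn (fun t => κ.real {x | t ≤ f x}) (Set.Ioc 0 b) := by
    have : Antitone fun t => κ.real {x | t ≤ f x} :=
      fun _ _ hst => measureReal_mono fun _ hx => hst.trans hx
    exact ((this.antitoneOn _).integrableOn_isCompact isCompact_Icc).mono_set
      Set.Ioc_subset_Icc_self
  rw [layer_cake μ, layer_cake ν,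
    ← integral_sub (integrable_superlevel μ) (integrable_superlevel ν), ← Real.norm_eq_abs]
  calc _ ≤ c * volume.real (Set.Ioc 0 b) :=
        norm_setIntegral_le_of_norm_le_const measure_Ioc_lt_top fun t _ => hc t
    _ = b * c := by rw [Real.volume_real_Ioc_of_le hb, sub_zero, mul_comm]

lemma abs_integral_sub_integral_le_of_measurable [IsProbabilityMeasure μ] [IsProbabilityMeasure ν]
    (hm : m ≤ mΩ) (hf : Measurable[m] f) (hfab : ∀ x, f x ∈ Set.Icc a b)
    (hc : ∀ E, MeasurableSet[m] E → |μ.real E - ν.real E| ≤ c) :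
    |(∫ x, f x ∂μ) - ∫ x, f x ∂ν| ≤ (b - a) * c := by
  have hf' : Measurable f := hf.mono hm le_rfl
  have hab : a ≤ b := by
    obtain ⟨x⟩ := μ.nonempty_of_neZero
    exact (hfab x).1.trans (hfab x).2
  have integral_shift (κ : Measure Ω) [IsProbabilityMeasure κ] :
      ∫ x, (f x - a) ∂κ = (∫ x, f x ∂κ) - a := by
    rw [integral_sub (.of_mem_Icc a b hf'.aemeasurable (.of_forall hfab)) (integrable_const a)]
    simp only [integral_const, probReal_univ, one_smul]
  have hshift := abs_integral_sub_integral_le_of_superlevel (μ := μ) (ν := ν)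
    (sub_nonneg.2 hab) (hf'.sub_const a)
    (fun x => ⟨sub_nonneg.2 (hfab x).1, sub_le_sub_right (hfab x).2 a⟩)
    fun t => hc _ ((hf.sub_const a) measurableSet_Ici)
  rwa [integral_shift μ, integral_shift ν, sub_sub_sub_cancel_right] at hshift

end IntegralDiscrepancy

section CylinderDist

variable {A : Type*} [MeasurableSpace A]

lemma comap_eval_le_cylinderAlg {s t : ℕ} (hst : s < t) :
    MeasurableSpace.comap (fun z : ℕ → A => z s) inferInstance ≤ cylinderAlg A t :=
  le_iSup₂_of_le s (Finset.mem_range.2 hst) le_rfl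

lemma cylinderAlg_le (t : ℕ) : cylinderAlg A t ≤ MeasurableSpace.pi :=
  iSup₂_le fun s _ => (measurable_pi_apply s).comap_le

/-- The discrepancy of `μ` and `ν` on events determined by the first `t` coordinates, i.e. the
supremum in the `t`-th summand of `weakDist`. -/
noncomputable def cylinderDist (μ ν : Measure (ℕ → A)) (t : ℕ) : ℝ :=
  ⨆ E : {E : Set (ℕ → A) // MeasurableSet[cylinderAlg A t] E}, |μ.real E.1 - ν.real E.1|

lemma weakDist_eq_tsum_cylinderDist (μ ν : Measure (ℕ → A)) :
    weakDist μ ν = ∑' t : ℕ, (2 : ℝ)⁻¹ ^ (t + 1) * cylinderDist μ ν (t + 1) :=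
  rfl

lemma cylinderDist_nonneg (μ ν : Measure (ℕ → A)) (t : ℕ) : 0 ≤ cylinderDist μ ν t :=
  Real.iSup_nonneg fun _ => abs_nonneg _

variable (μ ν : Measure (ℕ → A)) [IsProbabilityMeasure μ] [IsProbabilityMeasure ν]

lemma cylinderDist_le_one (t : ℕ) : cylinderDist μ ν t ≤ 1 :=
  Real.iSup_le (fun E => abs_measureReal_sub_le_one E.1) zero_le_one

lemma abs_measureReal_sub_le_cylinderDist {t : ℕ} {E : Set (ℕ → A)}
    (hE : MeasurableSet[cylinderAlg A t] E) : |μ.real E - ν.real E| ≤ cylinderDist μ ν t :=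
  le_ciSup (f := fun E : {E // MeasurableSet[cylinderAlg A t] E} => |μ.real E.1 - ν.real E.1|)
    ⟨1, by rintro _ ⟨E, rfl⟩; exact abs_measureReal_sub_le_one E.1⟩ ⟨E, hE⟩

lemma cylinderDist_succ_le_two_pow_mul_weakDist (t : ℕ) :
    cylinderDist μ ν (t + 1) ≤ 2 ^ (t + 1) * weakDist μ ν := by
  have summand_nonneg (s : ℕ) : 0 ≤ (2 : ℝ)⁻¹ ^ (s + 1) * cylinderDist μ ν (s + 1) :=
    mul_nonneg (by positivity) (cylinderDist_nonneg μ ν (s + 1))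
  have summable_geometric : Summable fun s : ℕ => (2 : ℝ)⁻¹ ^ (s + 1) :=
    (summable_nat_add_iff 1).2 (summable_geometric_of_lt_one (by norm_num) (by norm_num))
  have summable : Summable fun s : ℕ => (2 : ℝ)⁻¹ ^ (s + 1) * cylinderDist μ ν (s + 1) :=
    summable_geometric.of_nonneg_of_le summand_nonneg fun s =>
      mul_le_of_le_one_right (by positivity) (cylinderDist_le_one μ ν (s + 1))
  calc cylinderDist μ ν (t + 1)
      = 2 ^ (t + 1) * ((2 : ℝ)⁻¹ ^ (t + 1) * cylinderDist μ ν (t + 1)) := by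
        rw [inv_pow, mul_inv_cancel_left₀ (by positivity)]
    _ ≤ 2 ^ (t + 1) * weakDist μ ν := by
        rw [weakDist_eq_tsum_cylinderDist]
        gcongr
        exact summable.le_tsum t fun s _ => summand_nonneg s

end CylinderDist

section DiscountedPayoff

variable {A : Type*} {L a b : ℝ} {u : A → ℝ}

/-- The normalized discounted payoff of the play path `z`, with discount factor `L` and stage
payoff `u`. -/
noncomputable def discountedPayoff (L : ℝ) (u : A → ℝ) (z : ℕ → A) : ℝ :=
  (1 - L) * ∑' t : ℕ, L ^ t * u (z t)

/-- The contribution of the stages `t < N` to `discountedPayoff`, with the same normalization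
`1 - L`. -/
noncomputable def truncatedPayoff (L : ℝ) (u : A → ℝ) (N : ℕ) (z : ℕ → A) : ℝ :=
  (1 - L) * ∑ t ∈ Finset.range N, L ^ t * u (z t)

lemma truncatedPayoff_mem_Icc (hL0 : 0 ≤ L) (hL1 : L ≤ 1) (hu : ∀ x, u x ∈ Set.Icc a b)
    (N : ℕ) (z : ℕ → A) :
    truncatedPayoff L u N z ∈ Set.Icc ((1 - L ^ N) * a) ((1 - L ^ N) * b) := by
  have : 0 ≤ 1 - L := sub_nonneg.2 hL1
  rw [← mul_neg_geom_sum, mul_assoc, mul_assoc, Finset.sum_mul, Finset.sum_mul]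
  unfold truncatedPayoff
  constructor <;> gcongr
  exacts [(hu _).1, (hu _).2]

lemma summable_pow_mul_stage (hL0 : 0 ≤ L) (hL1 : L < 1) (hu : ∀ x, u x ∈ Set.Icc a b)
    (z : ℕ → A) : Summable fun t : ℕ => L ^ t * u (z t) := by
  refine .of_norm_bounded ((summable_geometric_of_lt_one hL0 hL1).mul_right (max |a| |b|))
    fun t => ?_
  rw [norm_mul, norm_pow, Real.norm_of_nonneg hL0, Real.norm_eq_abs]
  gcongr
  exact abs_le_max_abs_abs (hu _).1 (hu _).2

lemma tendsto_truncatedPayoff (hL0 : 0 ≤ L) (hL1 : L < 1) (hu : ∀ x, u x ∈ Set.Icc a b)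
    (z : ℕ → A) :
    Tendsto (fun N => truncatedPayoff L u N z) atTop (nhds (discountedPayoff L u z)) :=
  (summable_pow_mul_stage hL0 hL1 hu z).hasSum.tendsto_sum_nat.const_mul (1 - L)

lemma discountedPayoff_mem_Icc (hL0 : 0 ≤ L) (hL1 : L < 1) (hu : ∀ x, u x ∈ Set.Icc a b)
    (z : ℕ → A) : discountedPayoff L u z ∈ Set.Icc a b := by
  have tendsto_weight (c : ℝ) : Tendsto (fun N : ℕ => (1 - L ^ N) * c) atTop (nhds c) := by
    simpa only [sub_zero, one_mul] using
      ((tendsto_pow_atTop_nhds_zero_of_lt_one hL0 hL1).const_sub 1).mul_const c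
  have htrunc := tendsto_truncatedPayoff hL0 hL1 hu z
  have hmem := truncatedPayoff_mem_Icc hL0 hL1.le hu (z := z)
  exact ⟨le_of_tendsto_of_tendsto' (tendsto_weight a) htrunc fun N => (hmem N).1,
    le_of_tendsto_of_tendsto' htrunc (tendsto_weight b) fun N => (hmem N).2⟩

lemma discountedPayoff_eq_truncatedPayoff_add (hL0 : 0 ≤ L) (hL1 : L < 1)
    (hu : ∀ x, u x ∈ Set.Icc a b) (N : ℕ) (z : ℕ → A) :
    discountedPayoff L u z =
      truncatedPayoff L u N z + L ^ N * discountedPayoff L u (fun t => z (t + N)) := by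
  unfold discountedPayoff truncatedPayoff
  rw [← (summable_pow_mul_stage hL0 hL1 hu z).sum_add_tsum_nat_add N]
  simp only [pow_add, mul_right_comm _ (L ^ N), tsum_mul_right]
  ring

variable [MeasurableSpace A]

lemma measurable_truncatedPayoff (hu : Measurable u) (N : ℕ) :
    Measurable[cylinderAlg A N] (truncatedPayoff L u N) := by
  refine (Finset.measurable_fun_sum _ fun t ht => ?_).const_mul _
  have heval : Measurable[cylinderAlg A N] fun z : ℕ → A => z t :=
    measurable_iff_comap_le.2 (comap_eval_le_cylinderAlg (Finset.mem_range.1 ht))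
  exact (hu.comp heval).const_mul _

lemma measurable_discountedPayoff (hu : Measurable u) : Measurable (discountedPayoff L u) := by
  unfold discountedPayoff
  fun_prop

lemma abs_integral_truncatedPayoff_sub_le (μ ν : Measure (ℕ → A)) [IsProbabilityMeasure μ]
    [IsProbabilityMeasure ν] (hL0 : 0 ≤ L) (hL1 : L ≤ 1) (hum : Measurable u)
    (hu : ∀ x, u x ∈ Set.Icc a b) (N : ℕ) :
    |(∫ z, truncatedPayoff L u N z ∂μ) - ∫ z, truncatedPayoff L u N z ∂ν| ≤
      (b - a) * cylinderDist μ ν N := by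
  have hab : 0 ≤ b - a := by
    obtain ⟨z⟩ := μ.nonempty_of_neZero
    exact sub_nonneg.2 ((hu (z 0)).1.trans (hu (z 0)).2)
  have hweight : 1 - L ^ N ≤ 1 := sub_le_self 1 (pow_nonneg hL0 N)
  calc _ ≤ ((1 - L ^ N) * b - (1 - L ^ N) * a) * cylinderDist μ ν N :=
        abs_integral_sub_integral_le_of_measurable (cylinderAlg_le N)
          (measurable_truncatedPayoff hum N) (truncatedPayoff_mem_Icc hL0 hL1 hu N)
          fun _ => abs_measureReal_sub_le_cylinderDist μ ν
    _ ≤ (b - a) * cylinderDist μ ν N := by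
        rw [← mul_sub]
        exact mul_le_mul_of_nonneg_right (mul_le_of_le_one_left hab hweight)
          (cylinderDist_nonneg μ ν N)

lemma abs_integral_discountedPayoff_sub_le (μ ν : Measure (ℕ → A)) [IsProbabilityMeasure μ]
    [IsProbabilityMeasure ν] (hL0 : 0 ≤ L) (hL1 : L < 1) (hum : Measurable u)
    (hu : ∀ x, u x ∈ Set.Icc a b) (N : ℕ) :
    |(∫ z, discountedPayoff L u z ∂μ) - ∫ z, discountedPayoff L u z ∂ν| ≤
      (b - a) * (cylinderDist μ ν N + L ^ N) := by
  let tail (z : ℕ → A) : ℝ := discountedPayoff L u fun t => z (t + N)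
  have htail : Measurable tail := (measurable_discountedPayoff hum).comp (by fun_prop)
  have htail_mem (z : ℕ → A) : tail z ∈ Set.Icc a b := discountedPayoff_mem_Icc hL0 hL1 hu _
  have integral_split (κ : Measure (ℕ → A)) [IsProbabilityMeasure κ] :
      ∫ z, discountedPayoff L u z ∂κ =
        (∫ z, truncatedPayoff L u N z ∂κ) + L ^ N * ∫ z, tail z ∂κ := by
    rw [integral_congr_ae (.of_forall (discountedPayoff_eq_truncatedPayoff_add hL0 hL1 hu N)),
      integral_add, integral_const_mul]
    · exact .of_mem_Icc _ _ ((measurable_truncatedPayoff hum N).mono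
        (cylinderAlg_le N) le_rfl).aemeasurable
        (.of_forall (truncatedPayoff_mem_Icc hL0 hL1.le hu N))
    · exact (Integrable.of_mem_Icc a b htail.aemeasurable (.of_forall htail_mem)).const_mul _
  have htail_diff : |(∫ z, tail z ∂μ) - ∫ z, tail z ∂ν| ≤ (b - a) * 1 :=
    abs_integral_sub_integral_le_of_measurable le_rfl htail htail_mem
      fun E _ => abs_measureReal_sub_le_one E
  rw [integral_split μ, integral_split ν, add_sub_add_comm, ← mul_sub]
  calc _ ≤ _ + |L ^ N * ((∫ z, tail z ∂μ) - ∫ z, tail z ∂ν)| := abs_add_le _ _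
    _ ≤ (b - a) * cylinderDist μ ν N + L ^ N * ((b - a) * 1) := by
        rw [abs_mul, abs_of_nonneg (pow_nonneg hL0 N)]
        gcongr
        exact abs_integral_truncatedPayoff_sub_le μ ν hL0 hL1.le hum hu N
    _ = (b - a) * (cylinderDist μ ν N + L ^ N) := by ring

end DiscountedPayoff

theorem discounted_payoff_continuous_in_weakDist_general {A : Type*} [MeasurableSpace A]
    {L : ℝ} (hL : L ∈ Set.Ico (0 : ℝ) 1) (a b : ℝ) {δ : ℝ} (hδ : 0 < δ) :
    ∃ ρ > (0 : ℝ), ∀ u : A → ℝ, Measurable u → (∀ x, u x ∈ Set.Icc a b) →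
      ∀ μ ν : Measure (ℕ → A), IsProbabilityMeasure μ → IsProbabilityMeasure ν →
        weakDist μ ν ≤ ρ →
        |(∫ z, discountedPayoff L u z ∂μ) - ∫ z, discountedPayoff L u z ∂ν| ≤ δ := by
  obtain ⟨hL0, hL1⟩ := hL
  -- `K` replaces `b - a`, which may vanish.
  obtain ⟨K, hK, hbaK⟩ : ∃ K > (0 : ℝ), b - a ≤ K := ⟨max (b - a) 1, by positivity, le_max_left _ _⟩
  obtain ⟨N, hN⟩ := exists_pow_lt_of_lt_one (show 0 < δ / (2 * K) by positivity) hL1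
  refine ⟨δ / (2 * K) / 2 ^ (N + 1), by positivity, fun u hum hu μ ν _ _ hd => ?_⟩
  calc _ ≤ (b - a) * (cylinderDist μ ν (N + 1) + L ^ (N + 1)) :=
        abs_integral_discountedPayoff_sub_le μ ν hL0 hL1 hum hu (N + 1)
    _ ≤ K * (2 ^ (N + 1) * weakDist μ ν + L ^ N) := by
        have := cylinderDist_nonneg μ ν (N + 1)
        gcongr ?_ * (?_ + ?_)
        · exact cylinderDist_succ_le_two_pow_mul_weakDist μ ν N
        · exact pow_le_pow_of_le_one hL0 hL1.le N.le_succ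
    _ ≤ K * (2 ^ (N + 1) * (δ / (2 * K) / 2 ^ (N + 1)) + δ / (2 * K)) := by gcongr
    _ = δ := by field_simp; norm_num

/-- **Continuity of the normalized discounted payoff with respect to the weak
distance on play-path distributions.** -/
theorem discounted_payoff_continuous_in_weakDist {A : Type*}
    [Fintype A] [Nonempty A] [MeasurableSpace A] [MeasurableSingletonClass A]
    (L : ℝ) (hL : L ∈ Set.Ioo (0 : ℝ) 1)
    (u : A → ℝ) (hu : ∀ a, u a ∈ Set.Icc (0 : ℝ) 1) :
    ∀ δ > (0 : ℝ), ∃ ρ > (0 : ℝ),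
      ∀ μ ν : Measure (ℕ → A), IsProbabilityMeasure μ → IsProbabilityMeasure ν →
        weakDist μ ν ≤ ρ →
        |(∫ z, (1 - L) * ∑' t : ℕ, L ^ t * u (z t) ∂μ) -
            (∫ z, (1 - L) * ∑' t : ℕ, L ^ t * u (z t) ∂ν)| ≤ δ := by
  intro δ hδ
  obtain ⟨ρ, hρ, h⟩ := discounted_payoff_continuous_in_weakDist_general (A := A)
    ⟨hL.1.le, hL.2⟩ 0 1 hδ
  exact ⟨ρ, hρ, h u (measurable_of_finite u) hu⟩
end

section
/- In the finite-horizon repeated game setting [see context], let ψ ≥ 0 and suppose the T-horizon strategy profile f is a finite-horizon weak ψ-subjective 0-equilibrium. Then there exists a T-horizon strategy profile f̂ such that: (i) f̂ is a ψ-Nash equilibrium of the T-period game, i.e. for every player i and every T-horizon strategy g_i of player i, U_i^T(f̂) ≥ U_i^T(g_i, f̂_{−i}) − ψ; and (ii) the induced distributions on A^T coincide: μ^{f̂}(w) = μ^f(w) for every w ∈ A^T. (Finite-horizon purification: a weak ψ-subjective 0-equilibrium can be patched into an exact ψ-Nash equilibrium of the T-period game without changing the distribution of play.) -/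
open scoped BigOperators

section FiniteHorizon

variable {I : Type*} [Fintype I] [DecidableEq I] [Nonempty I]
variable {A : I → Type*} [∀ i, Fintype (A i)] [∀ i, Nonempty (A i)]

/-- A (behavior) strategy profile: each player `i` assigns to every history
(a list of joint actions) a probability vector on its own action set. -/
abbrev Profile (I : Type*) (A : I → Type*) : Type _ :=
  ∀ i, List (∀ j, A j) → A i → ℝ

/-- Every prescription of the profile is a probability vector. -/
def IsProfile (f : Profile I A) : Prop :=
  ∀ i h, IsProbVec (f i h)

/-- The history consisting of the first `t` joint actions of `w`. -/
def histPrefix {T : ℕ} (w : Fin T → ∀ j, A j) (t : Fin T) : List (∀ j, A j) :=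
  List.ofFn fun s : Fin t.1 => w (Fin.castLE t.isLt.le s)

/-- The probability that the profile `f` generates the length-`T` play path `w`. -/
def pathProb (T : ℕ) (f : Profile I A) (w : Fin T → ∀ j, A j) : ℝ :=
  ∏ t : Fin T, ∏ i, f i (histPrefix w t) (w t i)

/-- The `T`-period (normalized) discounted payoff of player `i` under profile `f`. -/
def UT (T : ℕ) (u : ∀ i : I, (∀ j, A j) → ℝ) (lam : I → ℝ) (i : I) (f : Profile I A) : ℝ :=
  ∑ w : Fin T → ∀ j, A j,
    pathProb T f w * ((1 - lam i) * ∑ t : Fin T, lam i ^ (t : ℕ) * u i (w t))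

/-- An event `E ⊆ A^T` depends only on the first `t` coordinates. -/
def DependsOnFirst (T t : ℕ) (E : Set (Fin T → ∀ j, A j)) : Prop :=
  ∀ w w', (∀ s : Fin T, (s : ℕ) < t → w s = w' s) → (w ∈ E ↔ w' ∈ E)

/-- The truncated weak distance between two distributions on `A^T`:
`d_T(P,Q) := ∑_{t=1}^T 2^{-t} ⋅ max { |P(E) - Q(E)| : E depends only on the first
`t` coordinates }`. -/
noncomputable def dT (T : ℕ) (P Q : (Fin T → ∀ j, A j) → ℝ) : ℝ :=
  ∑ t ∈ Finset.range T, (2 : ℝ)⁻¹ ^ (t + 1) *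
    ⨆ E : {E : Set (Fin T → ∀ j, A j) // DependsOnFirst T (t + 1) E},
      |(∑ w, E.1.indicator P w) - ∑ w, E.1.indicator Q w|

/-- `f` is a `ψ`-Nash equilibrium of the `T`-period game. -/
def IsNashT (T : ℕ) (u : ∀ i : I, (∀ j, A j) → ℝ) (lam : I → ℝ) (ψ : ℝ)
    (f : Profile I A) : Prop :=
  ∀ i (g : List (∀ j, A j) → A i → ℝ), (∀ h, IsProbVec (g h)) →
    UT T u lam i f ≥ UT T u lam i (Function.update f i g) - ψ

/-- `f` is a finite-horizon weak `ψ`-subjective `η`-equilibrium. -/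
def IsWeakSubjT (T : ℕ) (u : ∀ i : I, (∀ j, A j) → ℝ) (lam : I → ℝ) (ψ η : ℝ)
    (f : Profile I A) : Prop :=
  ∀ i, ∃ f' : Profile I A, IsProfile f' ∧ f' i = f i ∧
    UT T u lam i f' ≥
      (⨆ g : {g : List (∀ j, A j) → A i → ℝ // ∀ h, IsProbVec (g h)},
        UT T u lam i (Function.update f' i g.1)) - ψ ∧
    dT T (pathProb T f') (pathProb T f) ≤ η

/-!
Let play follow player `i`'s belief after every history in which `i` alone made the first move of
probability zero, and follow `f` after all other histories. At most one player is blamed for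
leaving the support of play, so the beliefs of different players never compete. A deviation by `i`
can only reach histories on the path of `f` or blamed on `i`; on the path, equal laws of play force
the belief to agree with `f`, so `i` faces exactly the opponents of the belief. Every deviation
therefore has the same law of play against the patched profile as against the belief, where it is
unprofitable.
-/

section ProbabilityVectors

variable {ι : Type*} [Fintype ι] {α : ι → Type*} [∀ i, Fintype (α i)]

theorem IsProbVec.le_one {S : Type*} [Fintype S] {p : S → ℝ} (hp : IsProbVec p) (s : S) :
    p s ≤ 1 :=
  hp.2 ▸ Finset.single_le_sum (fun s _ => hp.1 s) (Finset.mem_univ s)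

theorem sum_prod_eq_one [DecidableEq ι] {R : Type*} [CommSemiring R] {p : ∀ i, α i → R}
    (hp : ∀ i, ∑ b, p i b = 1) : ∑ a : ∀ i, α i, ∏ i, p i (a i) = 1 := by
  rw [← Fintype.piFinset_univ, ← Finset.prod_univ_sum]
  exact Finset.prod_eq_one fun i _ => hp i

theorem sum_piFinset_update_singleton_prod [DecidableEq ι] {R : Type*} [CommSemiring R]
    {p : ∀ i, α i → R} {i : ι} (hp : ∀ j, j ≠ i → ∑ b, p j b = 1) (b : α i) :
    ∑ a ∈ Fintype.piFinset (Function.update (fun _ => Finset.univ) i {b}), ∏ j, p j (a j) =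
      p i b := by
  rw [← Finset.prod_univ_sum, Fintype.prod_eq_single i]
  · simp
  · intro j hji
    rw [Function.update_of_ne hji, hp j hji]

theorem eq_of_forall_prod_eq {R : Type*} [CommSemiring R] {p q : ∀ i, α i → R}
    (hp : ∀ i, ∑ b, p i b = 1) (hq : ∀ i, ∑ b, q i b = 1)
    (hpq : ∀ a : ∀ i, α i, ∏ i, p i (a i) = ∏ i, q i (a i)) : p = q := by
  classical
  funext i b
  rw [← sum_piFinset_update_singleton_prod fun j _ => hp j,
    ← sum_piFinset_update_singleton_prod fun j _ => hq j]
  exact Finset.sum_congr rfl fun a _ => hpq a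

end ProbabilityVectors

section Histories

variable {ι : Type*} {α : ι → Type*}

/-- The history `h` lies on the path of play of `f`: every action in it was played with nonzero
probability by every player. The prefixes `past ++ [a]` of `h` enumerate its stages, `a` being the
joint action chosen after `past`. -/
def IsOnPath (f : Profile ι α) (h : List (∀ j, α j)) : Prop :=
  ∀ past a, past ++ [a] <+: h → ∀ j, f j past (a j) ≠ 0

/-- Player `i` alone is responsible for the first exit of `h` from the path of play of `f`. -/
def IsFirstDeviator (f : Profile ι α) (i : ι) (h : List (∀ j, α j)) : Prop :=
  ∃ past a, past ++ [a] <+: h ∧ IsOnPath f past ∧ f i past (a i) = 0 ∧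
    ∀ j, j ≠ i → f j past (a j) ≠ 0

variable {f p : Profile ι α} {i j : ι} {h : List (∀ j, α j)}

theorem isOnPath_nil : IsOnPath f [] := by
  simp [IsOnPath]

theorem isOnPath_concat {a : ∀ j, α j} :
    IsOnPath f (h ++ [a]) ↔ IsOnPath f h ∧ ∀ j, f j h (a j) ≠ 0 := by
  constructor
  · exact fun hh => ⟨fun past b hb => hh past b (hb.trans (List.prefix_append h [a])),
      hh h a List.prefix_rfl⟩
  · rintro ⟨hh, ha⟩ past b hb
    rcases List.prefix_concat_iff.1 hb with heq | hb
    · obtain ⟨rfl, rfl⟩ : past = h ∧ b = a := by simpa using heq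
      exact ha
    · exact hh past b hb

theorem IsFirstDeviator.not_isOnPath (hi : IsFirstDeviator f i h) : ¬ IsOnPath f h := by
  obtain ⟨past, a, hpre, -, hzero, -⟩ := hi
  exact fun hh => hh past a hpre i hzero

theorem IsFirstDeviator.concat (hi : IsFirstDeviator f i h) (a : ∀ j, α j) :
    IsFirstDeviator f i (h ++ [a]) := by
  obtain ⟨past, b, hpre, hdev⟩ := hi
  exact ⟨past, b, hpre.trans (List.prefix_append h [a]), hdev⟩

theorem IsOnPath.concat_eq_of_prefix {h₁ h₂ : List (∀ j, α j)} {a b : ∀ j, α j}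
    (hh₂ : IsOnPath f h₂) (hpre : h₁ ++ [a] <+: h₂ ++ [b]) (hzero : f i h₁ (a i) = 0) :
    h₁ ++ [a] = h₂ ++ [b] :=
  (List.prefix_concat_iff.1 hpre).resolve_right fun hlt => hh₂ h₁ a hlt i hzero

theorem IsFirstDeviator.unique (hi : IsFirstDeviator f i h) (hj : IsFirstDeviator f j h) :
    i = j := by
  obtain ⟨h₁, a, hpre₁, hon₁, hzero₁, -⟩ := hi
  obtain ⟨h₂, b, hpre₂, hon₂, hzero₂, hne₂⟩ := hj
  have hexit : h₁ ++ [a] = h₂ ++ [b] :=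
    (List.prefix_or_prefix_of_prefix hpre₁ hpre₂).elim
      (fun hle => hon₂.concat_eq_of_prefix hle hzero₁)
      fun hle => (hon₁.concat_eq_of_prefix hle hzero₂).symm
  obtain ⟨rfl, rfl⟩ : h₁ = h₂ ∧ a = b := by simpa using hexit
  exact by_contra fun hij => hne₂ i hij hzero₁

theorem isOnPath_or_isFirstDeviator (hpf : ∀ h, IsOnPath f h → ∀ j, j ≠ i → p j h = f j h)
    (hp : IsOnPath p h) : IsOnPath f h ∨ IsFirstDeviator f i h := by
  induction h using List.reverseRecOn with
  | nil => exact .inl isOnPath_nil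
  | append_singleton h a ih =>
    obtain ⟨hp, ha⟩ := isOnPath_concat.1 hp
    rcases ih hp with hf | hi
    · have hne : ∀ j, j ≠ i → f j h (a j) ≠ 0 := fun j hji => hpf h hf j hji ▸ ha j
      by_cases hzero : f i h (a i) = 0
      · exact .inr ⟨h, a, List.prefix_rfl, hf, hzero, hne⟩
      · refine .inl (isOnPath_concat.2 ⟨hf, fun j => ?_⟩)
        rcases eq_or_ne j i with rfl | hji
        exacts [hzero, hne j hji]
    · exact .inr (hi.concat a)

end Histories

section LawOfPlay

variable {ι : Type*} [Fintype ι] {α : ι → Type*}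

theorem pathProb_snoc {n : ℕ} (f : Profile ι α) (w : Fin n → ∀ j, α j) (a : ∀ j, α j) :
    pathProb (n + 1) f (Fin.snoc (α := fun _ => ∀ j, α j) w a) =
      pathProb n f w * ∏ i, f i (List.ofFn w) (a i) := by
  have hcast (t : Fin n) :
      histPrefix (Fin.snoc (α := fun _ => ∀ j, α j) w a) t.castSucc = histPrefix w t :=
    congrArg List.ofFn <| funext fun s => Fin.snoc_castSucc (α := fun _ => ∀ j, α j) a w
      (Fin.castLE t.isLt.le s)
  have hlast :
      histPrefix (Fin.snoc (α := fun _ => ∀ j, α j) w a) (Fin.last n) = List.ofFn w :=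
    congrArg List.ofFn <| funext fun s => Fin.snoc_castSucc (α := fun _ => ∀ j, α j) a w s
  simp only [pathProb, Fin.prod_univ_castSucc, Fin.snoc_castSucc, Fin.snoc_last, hcast, hlast]

theorem pathProb_ne_zero_iff {n : ℕ} {f : Profile ι α} {w : Fin n → ∀ j, α j} :
    pathProb n f w ≠ 0 ↔ IsOnPath f (List.ofFn w) := by
  induction w using Fin.snocInduction with
  | elim0 => simp [pathProb, isOnPath_nil]
  | snoc w a ih =>
    rw [pathProb_snoc, mul_ne_zero_iff, ih, Finset.prod_ne_zero_iff, List.ofFn_succ_last]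
    simp [isOnPath_concat]

theorem pathProb_congr {n : ℕ} {p q : Profile ι α}
    (hpq : ∀ h : List (∀ j, α j), h.length < n → IsOnPath p h → ∀ i, p i h = q i h) :
    pathProb n p = pathProb n q := by
  induction n with
  | zero => funext w; simp [pathProb]
  | succ n ih =>
    funext w
    rw [← Fin.snoc_init_self w, pathProb_snoc, pathProb_snoc,
      ← ih fun h hlen => hpq h (hlen.trans n.lt_succ_self)]
    by_cases hw : pathProb n p (Fin.init w) = 0
    · rw [hw, zero_mul, zero_mul]
    · simp only [hpq _ (by simp) (pathProb_ne_zero_iff.1 hw)]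

variable [∀ i, Fintype (α i)]

theorem IsProfile.pathProb_mem_unitInterval {f : Profile ι α} (hf : IsProfile f) {n : ℕ}
    (w : Fin n → ∀ j, α j) : pathProb n f w ∈ unitInterval :=
  unitInterval.prod_mem fun _ _ => unitInterval.prod_mem fun i _ =>
    ⟨(hf i _).1 _, (hf i _).le_one _⟩

theorem IsProfile.sum_pathProb_snoc [DecidableEq ι] {f : Profile ι α} (hf : IsProfile f) {n : ℕ}
    (w : Fin n → ∀ j, α j) :
    ∑ a, pathProb (n + 1) f (Fin.snoc (α := fun _ => ∀ j, α j) w a) = pathProb n f w := by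
  simp only [pathProb_snoc]
  rw [← Finset.mul_sum, sum_prod_eq_one fun i => (hf i _).2, mul_one]

theorem pathProb_eq_of_le {m n : ℕ} (hmn : m ≤ n) {p q : Profile ι α} (hp : IsProfile p)
    (hq : IsProfile q) (hpq : pathProb n p = pathProb n q) : pathProb m p = pathProb m q := by
  classical
  induction hmn using Nat.decreasingInduction with
  | self => exact hpq
  | of_succ k _ ih => funext w; rw [← hp.sum_pathProb_snoc, ← hq.sum_pathProb_snoc, ih]

theorem IsOnPath.eq_of_pathProb_eq {n : ℕ} {p q : Profile ι α} (hp : IsProfile p)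
    (hq : IsProfile q) (hpq : pathProb n p = pathProb n q) {h : List (∀ j, α j)}
    (hlen : h.length < n) (hh : IsOnPath p h) (i : ι) : p i h = q i h := by
  have hreach : pathProb h.length p h.get ≠ 0 := by
    rwa [pathProb_ne_zero_iff, List.ofFn_get]
  have hstage (a : ∀ j, α j) : ∏ j, p j h (a j) = ∏ j, q j h (a j) := by
    have hsnoc := congrFun (pathProb_eq_of_le hlen hp hq hpq)
      (Fin.snoc (α := fun _ => ∀ j, α j) h.get a)
    rw [pathProb_snoc, pathProb_snoc, ← pathProb_eq_of_le hlen.le hp hq hpq, List.ofFn_get]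
      at hsnoc
    exact mul_left_cancel₀ hreach hsnoc
  exact congrFun (eq_of_forall_prod_eq (fun j => (hp j h).2) (fun j => (hq j h).2) hstage) i

end LawOfPlay

section SubjectiveEquilibrium

variable {ι : Type*} {α : ι → Type*}

theorem IsProfile.update [DecidableEq ι] [∀ i, Fintype (α i)] {f : Profile ι α}
    (hf : IsProfile f) {i : ι} {g : List (∀ j, α j) → α i → ℝ} (hg : ∀ h, IsProbVec (g h)) :
    IsProfile (Function.update f i g) :=
  (Function.forall_update_iff f fun _ fj => ∀ h, IsProbVec (fj h)).2 ⟨hg, fun j _ => hf j⟩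

theorem dependsOnFirst_horizon (T : ℕ) (E : Set (Fin T → ∀ j, α j)) : DependsOnFirst T T E := by
  intro w w' hww'
  rw [funext fun s => hww' s s.isLt]

variable [Fintype ι] [DecidableEq ι] [∀ i, Fintype (α i)]

theorem abs_sub_le_dT {T : ℕ} (hT : 1 ≤ T) (P Q : (Fin T → ∀ j, α j) → ℝ)
    (w : Fin T → ∀ j, α j) : (2 : ℝ)⁻¹ ^ T * |P w - Q w| ≤ dT T P Q := by
  classical
  obtain ⟨n, rfl⟩ := Nat.exists_eq_add_of_le' hT
  let gap (t : ℕ) (E : {E : Set (Fin (n + 1) → ∀ j, α j) // DependsOnFirst (n + 1) (t + 1) E}) :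
      ℝ := |(∑ w, E.1.indicator P w) - ∑ w, E.1.indicator Q w|
  have hsingleton : |P w - Q w| = gap n ⟨{w}, dependsOnFirst_horizon _ _⟩ := by
    simp [gap, Set.indicator_singleton]
  calc (2 : ℝ)⁻¹ ^ (n + 1) * |P w - Q w|
      ≤ (2 : ℝ)⁻¹ ^ (n + 1) * ⨆ E, gap n E := by
        rw [hsingleton]
        gcongr
        exact le_ciSup (Set.finite_range _).bddAbove _
    _ ≤ dT (n + 1) P Q :=
        Finset.single_le_sum (f := fun t => (2 : ℝ)⁻¹ ^ (t + 1) * ⨆ E, gap t E)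
          (fun t _ => mul_nonneg (by positivity) (Real.iSup_nonneg fun _ => abs_nonneg _))
          (Finset.self_mem_range_succ n)

theorem eq_of_dT_nonpos {T : ℕ} (hT : 1 ≤ T) {P Q : (Fin T → ∀ j, α j) → ℝ}
    (h : dT T P Q ≤ 0) : P = Q := by
  funext w
  have hw : |P w - Q w| ≤ 0 :=
    nonpos_of_mul_nonpos_right ((abs_sub_le_dT hT P Q w).trans h) (by positivity)
  exact sub_eq_zero.1 (abs_nonpos_iff.1 hw)

variable {T : ℕ} {u : ι → (∀ j, α j) → ℝ} {lam : ι → ℝ}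

theorem IsProfile.UT_le {f : Profile ι α} (hf : IsProfile f) (i : ι) :
    UT T u lam i f ≤
      ∑ w : Fin T → ∀ j, α j, |(1 - lam i) * ∑ t : Fin T, lam i ^ (t : ℕ) * u i (w t)| := by
  refine Finset.sum_le_sum fun w _ => ?_
  obtain ⟨hnonneg, hle⟩ := hf.pathProb_mem_unitInterval w
  exact (mul_le_mul_of_nonneg_left (le_abs_self _) hnonneg).trans
    (mul_le_of_le_one_left (abs_nonneg _) hle)

theorem IsProfile.bddAbove_UT_update {f : Profile ι α} (hf : IsProfile f) (i : ι) :
    BddAbove (Set.range fun g : {g : List (∀ j, α j) → α i → ℝ // ∀ h, IsProbVec (g h)} =>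
      UT T u lam i (Function.update f i g.1)) := by
  refine ⟨∑ w : Fin T → ∀ j, α j, |(1 - lam i) * ∑ t : Fin T, lam i ^ (t : ℕ) * u i (w t)|, ?_⟩
  rintro _ ⟨g, rfl⟩
  exact (hf.update g.2).UT_le i

theorem IsWeakSubjT.exists_isProfile_pathProb_eq (hT : 1 ≤ T) {ψ : ℝ} {f : Profile ι α}
    (hweak : IsWeakSubjT T u lam ψ 0 f) (i : ι) :
    ∃ f' : Profile ι α, IsProfile f' ∧ pathProb T f' = pathProb T f ∧
      ∀ g : List (∀ j, α j) → α i → ℝ, (∀ h, IsProbVec (g h)) →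
        UT T u lam i f' ≥ UT T u lam i (Function.update f' i g) - ψ := by
  obtain ⟨f', hf', -, hopt, hdist⟩ := hweak i
  exact ⟨f', hf', eq_of_dT_nonpos hT hdist, fun g hg =>
    (sub_le_sub_right (le_ciSup (hf'.bddAbove_UT_update i) ⟨g, hg⟩) ψ).trans hopt⟩

end SubjectiveEquilibrium

section Patching

variable {ι : Type*} {α : ι → Type*} {f : Profile ι α} {F : ι → Profile ι α}

open Classical in
/-- The profile `f` patched by the beliefs `F`: once `i` has deviated first from `f`, play follows
`i`'s belief `F i`. The choice of `i` is harmless since the first deviator is unique. -/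
noncomputable def patch (f : Profile ι α) (F : ι → Profile ι α) : Profile ι α :=
  fun j h => if hdev : ∃ i, IsFirstDeviator f i h then F hdev.choose j h else f j h

theorem patch_of_isOnPath {h : List (∀ j, α j)} (hh : IsOnPath f h) (j : ι) :
    patch f F j h = f j h :=
  dif_neg fun ⟨_, hi⟩ => hi.not_isOnPath hh

theorem IsFirstDeviator.patch_eq {i : ι} {h : List (∀ j, α j)} (hi : IsFirstDeviator f i h)
    (j : ι) : patch f F j h = F i j h := by
  have hdev : ∃ i, IsFirstDeviator f i h := ⟨i, hi⟩
  rw [patch, dif_pos hdev, hdev.choose_spec.unique hi]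

theorem pathProb_patch [Fintype ι] (n : ℕ) : pathProb n (patch f F) = pathProb n f :=
  (pathProb_congr fun _ _ hh j => (patch_of_isOnPath hh j).symm).symm

variable [∀ i, Fintype (α i)]

theorem isProfile_patch (hf : IsProfile f) (hF : ∀ i, IsProfile (F i)) :
    IsProfile (patch f F) := by
  intro j h
  unfold patch
  split_ifs
  exacts [hF _ j h, hf j h]

theorem pathProb_update_patch [Fintype ι] [DecidableEq ι] {n : ℕ} (hf : IsProfile f)
    (hF : ∀ i, IsProfile (F i)) (hlaw : ∀ i, pathProb n (F i) = pathProb n f) (i : ι)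
    (g : List (∀ j, α j) → α i → ℝ) :
    pathProb n (Function.update (patch f F) i g) = pathProb n (Function.update (F i) i g) := by
  refine pathProb_congr fun h hlen hh j => ?_
  rcases eq_or_ne j i with rfl | hji
  · simp only [Function.update_self]
  rw [Function.update_of_ne hji, Function.update_of_ne hji]
  have hagree (past : List (∀ j, α j)) (hon : IsOnPath f past) (k : ι) (hki : k ≠ i) :
      Function.update (patch f F) i g k past = f k past := by
    rw [Function.update_of_ne hki, patch_of_isOnPath hon]
  rcases isOnPath_or_isFirstDeviator hagree hh with hon | hdev
  · rw [patch_of_isOnPath hon, hon.eq_of_pathProb_eq hf (hF i) (hlaw i).symm hlen]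
  · exact hdev.patch_eq j

theorem finite_horizon_purification_general [Fintype ι] [DecidableEq ι] {T : ℕ}
    (U : ι → ((Fin T → ∀ j, α j) → ℝ) → ℝ) (ψ : ℝ) (hf : IsProfile f)
    (hbelief : ∀ i, ∃ f' : Profile ι α, IsProfile f' ∧ pathProb T f' = pathProb T f ∧
      ∀ g : List (∀ j, α j) → α i → ℝ, (∀ h, IsProbVec (g h)) →
        U i (pathProb T f') ≥ U i (pathProb T (Function.update f' i g)) - ψ) :
    ∃ fhat : Profile ι α, IsProfile fhat ∧
      (∀ i (g : List (∀ j, α j) → α i → ℝ), (∀ h, IsProbVec (g h)) →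
        U i (pathProb T fhat) ≥ U i (pathProb T (Function.update fhat i g)) - ψ) ∧
      ∀ w, pathProb T fhat w = pathProb T f w := by
  choose F hF hlaw hopt using hbelief
  refine ⟨patch f F, isProfile_patch hf hF, fun i g hg => ?_, congrFun (pathProb_patch T)⟩
  rw [pathProb_patch, ← hlaw i, pathProb_update_patch hf hF hlaw]
  exact hopt i g hg

end Patching

/-- **Finite-horizon purification for `η = 0`**: a finite-horizon weak
`ψ`-subjective `0`-equilibrium can be patched into a `ψ`-Nash equilibrium of the
`T`-period game that induces exactly the same distribution on play paths. -/
theorem finite_horizon_purification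
    (T : ℕ) (hT : 1 ≤ T)
    (u : ∀ i : I, (∀ j, A j) → ℝ) (hu : ∀ i a, u i a ∈ Set.Icc (0 : ℝ) 1)
    (lam : I → ℝ) (hlam : ∀ i, lam i ∈ Set.Ioo (0 : ℝ) 1)
    (ψ : ℝ) (hψ : 0 ≤ ψ)
    (f : Profile I A) (hf : IsProfile f)
    (hweak : IsWeakSubjT T u lam ψ 0 f) :
    ∃ fhat : Profile I A, IsProfile fhat ∧
      IsNashT T u lam ψ fhat ∧
      ∀ w : Fin T → ∀ j, A j, pathProb T fhat w = pathProb T f w :=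
  finite_horizon_purification_general
    (fun i P => ∑ w, P w * ((1 - lam i) * ∑ t : Fin T, lam i ^ (t : ℕ) * u i (w t))) ψ hf
    (hweak.exists_isProfile_pathProb_eq hT)

end FiniteHorizon
end

section
/- Let A_i and A_{−i} be nonempty finite sets, A := A_i × A_{−i}, u : A → ℝ with 0 ≤ u ≤ 1, λ ∈ (0,1), and κ ∈ ℕ. Let g be an opponent rule assigning to each history h ∈ List A a probability vector g(h) on A_{−i}, and suppose g has memory at most κ: g h = g h' whenever the last min(κ, length h) entries of h equal the last min(κ, length h') entries of h'. A continuation strategy is a function σ assigning to each h ∈ List A a probability vector σ(h) on A_i. Given an initial history h₀ ∈ List A, for each k ≥ 0 the pair (σ, g) induces the probability distribution on A^{k+1} given by P_k^{σ,g,h₀}(a^0,…,a^k) := ∏_{j=0}^{k} σ(h₀ ++ (a^0,…,a^{j−1}))((a^j)_i) · g(h₀ ++ (a^0,…,a^{j−1}))((a^j)_{−i}), and the continuation value is V(σ | h₀; g) := ∑_{k=0}^{∞} (1−λ) λ^k ∑_{w ∈ A^{k+1}} P_k^{σ,g,h₀}(w) · u(w_k) (the series converges since each term lies in [0, (1−λ)λ^k]).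 Then there exists a function π assigning to each sequence over A of length at most κ a probability vector on A_i such that, defining the stationary strategy σ*(h) := π(last min(κ, length h) entries of h), for every initial history h₀: V(σ* | h₀; g) = ⨆_{σ} V(σ | h₀; g), where the supremum is over all continuation strategies σ. In particular, the supremum of the continuation value over all continuation strategies equals its supremum over strategies with memory at most κ. (Against a bounded-memory opponent, there is a stationary Markov best response in the memory state.) -/
/-!
The continuation value of a strategy is the unique bounded fixed point of an affine, monotone
operator on functions of the history, and a comparison principle holds for it: since continuation
payoffs are discounted by `lam < 1`, a bounded function lying below its image is dominated by any
bounded function lying above its image.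

If the opponent's behaviour depends on the history only through a state that is updated
recursively, the Bellman optimality operator on functions of the state is monotone and preserves
the functions bounded by `‖u‖`, so it has a fixed point by Knaster–Tarski, whether or not
there are finitely many states. Pulled back to histories, this fixed point lies above its image
under the operator of every strategy, and equals its image under the operator of the pure strategy
that maximizes the right-hand side of the Bellman equation in each state. The comparison principle
turns both facts into statements about continuation values. The last `κ` entries of the history are
such a state.
-/

open scoped BigOperators

section BoundedMemory

variable {Ai Am : Type*} [Fintype Ai] [Nonempty Ai] [Fintype Am] [Nonempty Am]

/-- The last `min (κ, length h)` entries of the history `h`. -/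
def suffixK (κ : ℕ) (h : List (Ai × Am)) : List (Ai × Am) :=
  h.drop (h.length - κ)

/-- The probability, under own continuation strategy `σ` and opponent rule `g`,
of the block `w` of the next `k+1` joint actions played after the initial
history `h₀`. -/
def blockProb (σ : List (Ai × Am) → Ai → ℝ) (g : List (Ai × Am) → Am → ℝ)
    (h₀ : List (Ai × Am)) {k : ℕ} (w : Fin (k + 1) → Ai × Am) : ℝ :=
  ∏ j : Fin (k + 1),
    σ (h₀ ++ List.ofFn fun s : Fin j.1 => w (Fin.castLE j.isLt.le s)) (w j).1 *
      g (h₀ ++ List.ofFn fun s : Fin j.1 => w (Fin.castLE j.isLt.le s)) (w j).2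

/-- The normalized discounted continuation value
`V(σ | h₀; g) = ∑_{k≥0} (1-λ) λ^k ∑_{w ∈ A^{k+1}} P_k(w) u(w_k)`. -/
noncomputable def contValue (lam : ℝ) (u : Ai × Am → ℝ)
    (σ : List (Ai × Am) → Ai → ℝ) (g : List (Ai × Am) → Am → ℝ)
    (h₀ : List (Ai × Am)) : ℝ :=
  ∑' k : ℕ, (1 - lam) * lam ^ k *
    ∑ w : Fin (k + 1) → Ai × Am, blockProb σ g h₀ w * u (w (Fin.last k))

section FiniteAverages

variable {S T : Type*} [Fintype S] [Fintype T] {p f f' : S → ℝ}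

theorem IsProbVec.sum_mul_mem (hp : IsProbVec p) {K : Set ℝ} (hK : Convex ℝ K)
    (hf : ∀ s, f s ∈ K) : ∑ s, p s * f s ∈ K :=
  hK.sum_mem (fun s _ => hp.1 s) hp.2 fun s _ => hf s

theorem IsProbVec.sum_mul_le (hp : IsProbVec p) {C : ℝ} (hf : ∀ s, f s ≤ C) :
    ∑ s, p s * f s ≤ C :=
  hp.sum_mul_mem (convex_Iic C) hf

theorem IsProbVec.abs_sum_mul_le (hp : IsProbVec p) {C : ℝ} (hf : ∀ s, |f s| ≤ C) :
    |∑ s, p s * f s| ≤ C :=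
  abs_le.2 <| hp.sum_mul_mem (convex_Icc (-C) C) fun s => abs_le.1 (hf s)

theorem IsProbVec.sum_mul_le_sum_mul_add (hp : IsProbVec p) {C : ℝ}
    (hf : ∀ s, f s ≤ f' s + C) : ∑ s, p s * f s ≤ ∑ s, p s * f' s + C := by
  have := hp.sum_mul_le fun s => sub_le_iff_le_add'.2 (hf s)
  simp only [mul_sub, Finset.sum_sub_distrib] at this
  linarith

theorem IsProbVec.prod {q : T → ℝ} (hp : IsProbVec p) (hq : IsProbVec q) :
    IsProbVec fun x : S × T => p x.1 * q x.2 :=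
  ⟨fun x => mul_nonneg (hp.1 x.1) (hq.1 x.2), by
    simp only [Fintype.sum_prod_type, ← Finset.mul_sum, hq.2, mul_one, hp.2]⟩

theorem isProbVec_single [DecidableEq S] (s : S) : IsProbVec (Pi.single s 1 : S → ℝ) :=
  single_mem_stdSimplex ℝ s

end FiniteAverages

theorem ciSup_subtype_eq_of_forall_le {ι α : Type*} [ConditionallyCompleteLattice α]
    {P : ι → Prop} {f : ι → α} {i : ι} (hi : P i) (hmax : ∀ j, P j → f j ≤ f i) :
    ⨆ j : {j // P j}, f j.1 = f i :=
  IsGreatest.csSup_eq ⟨⟨⟨i, hi⟩, rfl⟩, by rintro _ ⟨j, rfl⟩; exact hmax j.1 j.2⟩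

theorem hasSum_one_sub_mul_geometric {r : ℝ} (h0 : 0 ≤ r) (h1 : r < 1) :
    HasSum (fun k : ℕ => (1 - r) * r ^ k) 1 := by
  simpa only [mul_inv_cancel₀ (sub_pos.2 h1).ne'] using
    (hasSum_geometric_of_lt_one h0 h1).mul_left (1 - r)

theorem abs_one_sub_mul_add_mul_le {r x y C : ℝ} (h0 : 0 ≤ r) (h1 : r ≤ 1) (hx : |x| ≤ C)
    (hy : |y| ≤ C) : |(1 - r) * x + r * y| ≤ C :=
  abs_le.2 <| convex_Icc (-C) C (abs_le.1 hx) (abs_le.1 hy) (sub_nonneg.2 h1) h0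
    (sub_add_cancel 1 r)

section MemoryState

variable {A B : Type*}

theorem suffixK_suffixK (κ : ℕ) (h : List (A × B)) :
    suffixK κ (suffixK κ h) = suffixK κ h := by
  simp only [suffixK, List.length_drop, List.drop_drop]
  congr 1
  lia

theorem suffixK_suffixK_append_singleton (κ : ℕ) (h : List (A × B)) (x : A × B) :
    suffixK κ (suffixK κ h ++ [x]) = suffixK κ (h ++ [x]) := by
  have drop_append : suffixK κ h ++ [x] = (h ++ [x]).drop (h.length - κ) :=
    (List.drop_append_of_le_length (Nat.sub_le _ _)).symm
  simp only [drop_append]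
  simp only [suffixK, List.drop_drop, List.length_drop, List.length_append, List.length_singleton]
  congr 1
  lia

end MemoryState

section ContinuationValue

variable {A B : Type*} {lam : ℝ} {u : A × B → ℝ}
  {σ : List (A × B) → A → ℝ} {g : List (A × B) → B → ℝ}

theorem blockProb_cons (σ : List (A × B) → A → ℝ) (g : List (A × B) → B → ℝ)
    (h : List (A × B)) {k : ℕ} (x : A × B) (w : Fin (k + 1) → A × B) :
    blockProb σ g h (Fin.cons x w : Fin (k + 2) → A × B) =
      σ h x.1 * g h x.2 * blockProb σ g (h ++ [x]) w := by
  have history_cons (j : Fin (k + 1)) :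
      (List.ofFn fun s : Fin j.succ.1 =>
        (Fin.cons x w : Fin (k + 2) → A × B) (Fin.castLE j.succ.isLt.le s)) =
      x :: List.ofFn fun s : Fin j.1 => w (Fin.castLE j.isLt.le s) := List.ofFn_succ
  simp only [blockProb, Fin.prod_univ_succ (n := k + 1), history_cons, Fin.cons_succ,
    List.append_assoc, List.singleton_append]
  simp

variable [Fintype A] [Fintype B]

/-- The expected payoff in the `k`-th period after the history `h`. -/
def stagePayoff (u : A × B → ℝ) (σ : List (A × B) → A → ℝ) (g : List (A × B) → B → ℝ)
    (k : ℕ) (h : List (A × B)) : ℝ :=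
  ∑ w : Fin (k + 1) → A × B, blockProb σ g h w * u (w (Fin.last k))

theorem stagePayoff_zero (u : A × B → ℝ) (σ : List (A × B) → A → ℝ)
    (g : List (A × B) → B → ℝ) (h : List (A × B)) :
    stagePayoff u σ g 0 h = ∑ x : A × B, σ h x.1 * g h x.2 * u x := by
  rw [stagePayoff, ← (Equiv.funUnique (Fin 1) (A × B)).symm.sum_comp]
  simp [blockProb]

theorem stagePayoff_succ (u : A × B → ℝ) (σ : List (A × B) → A → ℝ)
    (g : List (A × B) → B → ℝ) (k : ℕ) (h : List (A × B)) :
    stagePayoff u σ g (k + 1) h =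
      ∑ x : A × B, σ h x.1 * g h x.2 * stagePayoff u σ g k (h ++ [x]) := by
  rw [stagePayoff, ← (Fin.consEquiv fun _ : Fin (k + 2) => A × B).sum_comp,
    Fintype.sum_prod_type]
  refine Finset.sum_congr rfl fun x _ => ?_
  rw [stagePayoff, Finset.mul_sum]
  refine Finset.sum_congr rfl fun w _ => ?_
  change blockProb σ g h (Fin.cons x w : Fin (k + 2) → A × B) *
    u ((Fin.cons x w : Fin (k + 2) → A × B) (Fin.last (k + 1))) = _
  rw [blockProb_cons, ← Fin.succ_last, Fin.cons_succ, mul_assoc]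

theorem abs_stagePayoff_le (u : A × B → ℝ) (hσ : ∀ h, IsProbVec (σ h))
    (hg : ∀ h, IsProbVec (g h)) (k : ℕ) (h : List (A × B)) :
    |stagePayoff u σ g k h| ≤ ‖u‖ := by
  induction k generalizing h with
  | zero =>
    rw [stagePayoff_zero]
    exact ((hσ h).prod (hg h)).abs_sum_mul_le (norm_le_pi_norm u)
  | succ k ih =>
    rw [stagePayoff_succ]
    exact ((hσ h).prod (hg h)).abs_sum_mul_le fun x => ih (h ++ [x])

theorem contValue_eq_tsum_stagePayoff (lam : ℝ) (u : A × B → ℝ) (σ : List (A × B) → A → ℝ)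
    (g : List (A × B) → B → ℝ) (h : List (A × B)) :
    contValue lam u σ g h = ∑' k : ℕ, (1 - lam) * lam ^ k * stagePayoff u σ g k h :=
  rfl

theorem norm_discounted_stagePayoff_le (h0 : 0 ≤ lam) (h1 : lam ≤ 1)
    (hσ : ∀ h, IsProbVec (σ h)) (hg : ∀ h, IsProbVec (g h)) (h : List (A × B)) (k : ℕ) :
    ‖(1 - lam) * lam ^ k * stagePayoff u σ g k h‖ ≤ (1 - lam) * lam ^ k * ‖u‖ := by
  have weight_nonneg : 0 ≤ (1 - lam) * lam ^ k :=
    mul_nonneg (sub_nonneg.2 h1) (pow_nonneg h0 k)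
  rw [norm_mul, Real.norm_of_nonneg weight_nonneg]
  exact mul_le_mul_of_nonneg_left (abs_stagePayoff_le u hσ hg k h) weight_nonneg

theorem summable_discounted_stagePayoff (h0 : 0 ≤ lam) (h1 : lam < 1)
    (hσ : ∀ h, IsProbVec (σ h)) (hg : ∀ h, IsProbVec (g h)) (h : List (A × B)) :
    Summable fun k : ℕ => (1 - lam) * lam ^ k * stagePayoff u σ g k h :=
  .of_norm_bounded ((hasSum_one_sub_mul_geometric h0 h1).summable.mul_right ‖u‖)
    (norm_discounted_stagePayoff_le h0 h1.le hσ hg h)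

theorem abs_contValue_le (h0 : 0 ≤ lam) (h1 : lam < 1) (hσ : ∀ h, IsProbVec (σ h))
    (hg : ∀ h, IsProbVec (g h)) (h : List (A × B)) : |contValue lam u σ g h| ≤ ‖u‖ :=
  tsum_of_norm_bounded
    (by simpa only [one_mul] using (hasSum_one_sub_mul_geometric h0 h1).mul_right ‖u‖)
    (norm_discounted_stagePayoff_le h0 h1.le hσ hg h)

/-- The policy evaluation operator of the strategy `σ`: play according to `σ` for one period,
then receive the continuation payoff `f` of the resulting history. -/
def strategyOp (lam : ℝ) (u : A × B → ℝ) (σ : List (A × B) → A → ℝ) (g : List (A × B) → B → ℝ)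
    (f : List (A × B) → ℝ) (h : List (A × B)) : ℝ :=
  ∑ x : A × B, σ h x.1 * g h x.2 * ((1 - lam) * u x + lam * f (h ++ [x]))

theorem contValue_eq_strategyOp (h0 : 0 ≤ lam) (h1 : lam < 1) (hσ : ∀ h, IsProbVec (σ h))
    (hg : ∀ h, IsProbVec (g h)) (h : List (A × B)) :
    contValue lam u σ g h = strategyOp lam u σ g (contValue lam u σ g) h := by
  have summable := summable_discounted_stagePayoff (u := u) h0 h1 hσ hg
  have shifted_term (k : ℕ) : (1 - lam) * lam ^ (k + 1) * stagePayoff u σ g (k + 1) h =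
      ∑ x : A × B, σ h x.1 * g h x.2 * lam *
        ((1 - lam) * lam ^ k * stagePayoff u σ g k (h ++ [x])) := by
    rw [stagePayoff_succ, Finset.mul_sum]
    exact Finset.sum_congr rfl fun x _ => by ring
  rw [contValue_eq_tsum_stagePayoff, (summable h).tsum_eq_zero_add]
  simp only [shifted_term]
  rw [Summable.tsum_finsetSum fun x _ => (summable (h ++ [x])).mul_left _, stagePayoff_zero,
    Finset.mul_sum, ← Finset.sum_add_distrib]
  refine Finset.sum_congr rfl fun x _ => ?_
  rw [tsum_mul_left, ← contValue_eq_tsum_stagePayoff]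
  ring

theorem strategyOp_le_strategyOp_add (h0 : 0 ≤ lam) (hσ : ∀ h, IsProbVec (σ h))
    (hg : ∀ h, IsProbVec (g h)) {f v : List (A × B) → ℝ} {C : ℝ} (hfv : ∀ h, f h ≤ v h + C)
    (h : List (A × B)) :
    strategyOp lam u σ g f h ≤ strategyOp lam u σ g v h + lam * C :=
  ((hσ h).prod (hg h)).sum_mul_le_sum_mul_add fun x => by
    linarith [mul_le_mul_of_nonneg_left (hfv (h ++ [x])) h0]

theorem le_of_le_strategyOp_of_strategyOp_le (h0 : 0 ≤ lam) (h1 : lam < 1)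
    (hσ : ∀ h, IsProbVec (σ h)) (hg : ∀ h, IsProbVec (g h)) {f v : List (A × B) → ℝ}
    (hbdd : BddAbove (Set.range fun h => f h - v h))
    (hf : ∀ h, f h ≤ strategyOp lam u σ g f h) (hv : ∀ h, strategyOp lam u σ g v h ≤ v h)
    (h : List (A × B)) : f h ≤ v h := by
  set gap := ⨆ h, (f h - v h)
  have le_add_gap (h) : f h ≤ v h + gap := sub_le_iff_le_add'.1 (le_ciSup hbdd h)
  have gap_le : gap ≤ lam * gap := ciSup_le fun h => by
    linarith [hf h, hv h, strategyOp_le_strategyOp_add (u := u) h0 hσ hg le_add_gap h]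
  have gap_nonpos : gap ≤ 0 := by nlinarith
  linarith [le_add_gap h]

theorem contValue_le_of_strategyOp_le (h0 : 0 ≤ lam) (h1 : lam < 1)
    (hσ : ∀ h, IsProbVec (σ h)) (hg : ∀ h, IsProbVec (g h)) {v : List (A × B) → ℝ}
    (hbdd : BddBelow (Set.range v)) (hv : ∀ h, strategyOp lam u σ g v h ≤ v h)
    (h : List (A × B)) : contValue lam u σ g h ≤ v h := by
  obtain ⟨C, hC⟩ := hbdd
  refine le_of_le_strategyOp_of_strategyOp_le h0 h1 hσ hg ⟨‖u‖ - C, ?_⟩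
    (fun h => (contValue_eq_strategyOp h0 h1 hσ hg h).le) hv h
  rintro _ ⟨h, rfl⟩
  exact sub_le_sub (abs_le.1 (abs_contValue_le h0 h1 hσ hg h)).2 (hC ⟨h, rfl⟩)

theorem le_contValue_of_le_strategyOp (h0 : 0 ≤ lam) (h1 : lam < 1)
    (hσ : ∀ h, IsProbVec (σ h)) (hg : ∀ h, IsProbVec (g h)) {v : List (A × B) → ℝ}
    (hbdd : BddAbove (Set.range v)) (hv : ∀ h, v h ≤ strategyOp lam u σ g v h)
    (h : List (A × B)) : v h ≤ contValue lam u σ g h := by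
  obtain ⟨C, hC⟩ := hbdd
  refine le_of_le_strategyOp_of_strategyOp_le h0 h1 hσ hg ⟨C - -‖u‖, ?_⟩ hv
    (fun h => (contValue_eq_strategyOp h0 h1 hσ hg h).ge) h
  rintro _ ⟨h, rfl⟩
  exact sub_le_sub (hC ⟨h, rfl⟩) (abs_le.1 (abs_contValue_le h0 h1 hσ hg h)).1

end ContinuationValue

section Bellman

variable {A B S : Type*} [Fintype B] {lam : ℝ} {u : A × B → ℝ} {γ : S → B → ℝ}
  {next : S → A × B → S} {v : S → ℝ}

/-- The payoff of the action `a` in the state `s`, when the opponent plays `γ s`, the state moves to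
`next s (a, b)`, and the continuation payoffs are given by `v`. -/
def actionValue (lam : ℝ) (u : A × B → ℝ) (γ : S → B → ℝ) (next : S → A × B → S) (v : S → ℝ)
    (s : S) (a : A) : ℝ :=
  ∑ b, γ s b * ((1 - lam) * u (a, b) + lam * v (next s (a, b)))

/-- The Bellman optimality operator on functions of the state. -/
noncomputable def bellmanOp (lam : ℝ) (u : A × B → ℝ) (γ : S → B → ℝ) (next : S → A × B → S)
    (v : S → ℝ) (s : S) : ℝ :=
  ⨆ a, actionValue lam u γ next v s a

theorem actionValue_mono (h0 : 0 ≤ lam) (hγ : ∀ s, IsProbVec (γ s)) (s : S) (a : A) :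
    Monotone fun v => actionValue lam u γ next v s a := fun v v' hv =>
  Finset.sum_le_sum fun b _ => mul_le_mul_of_nonneg_left
    (by linarith [mul_le_mul_of_nonneg_left (hv (next s (a, b))) h0]) ((hγ s).1 b)

theorem strategyOp_comp [Fintype A] {σ : List (A × B) → A → ℝ} {g : List (A × B) → B → ℝ}
    {φ : List (A × B) → S} (hφ : ∀ h x, φ (h ++ [x]) = next (φ h) x) (hgγ : ∀ h, g h = γ (φ h))
    (h : List (A × B)) :
    strategyOp lam u σ g (v ∘ φ) h = ∑ a, σ h a * actionValue lam u γ next v (φ h) a := by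
  simp only [strategyOp, actionValue, Function.comp_apply, hφ, hgγ, Fintype.sum_prod_type,
    Finset.mul_sum, mul_assoc]

theorem actionValue_le_bellmanOp [Finite A] (s : S) (a : A) :
    actionValue lam u γ next v s a ≤ bellmanOp lam u γ next v s :=
  le_ciSup (Set.finite_range _).bddAbove a

theorem exists_actionValue_eq_bellmanOp [Finite A] [Nonempty A] (lam : ℝ) (u : A × B → ℝ)
    (γ : S → B → ℝ) (next : S → A × B → S) (v : S → ℝ) (s : S) :
    ∃ a, actionValue lam u γ next v s a = bellmanOp lam u γ next v s :=
  exists_eq_ciSup_of_finite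

theorem bellmanOp_mono [Finite A] (h0 : 0 ≤ lam) (hγ : ∀ s, IsProbVec (γ s)) :
    Monotone (bellmanOp lam u γ next) := fun _ _ hv s =>
  ciSup_mono (Set.finite_range _).bddAbove fun a => actionValue_mono h0 hγ s a hv

theorem abs_bellmanOp_le [Fintype A] [Nonempty A] (h0 : 0 ≤ lam) (h1 : lam ≤ 1)
    (hγ : ∀ s, IsProbVec (γ s)) (hv : ∀ s, |v s| ≤ ‖u‖) (s : S) :
    |bellmanOp lam u γ next v s| ≤ ‖u‖ := by
  obtain ⟨a, ha⟩ := exists_actionValue_eq_bellmanOp lam u γ next v s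
  rw [← ha]
  exact (hγ s).abs_sum_mul_le fun b =>
    abs_one_sub_mul_add_mul_le h0 h1 (norm_le_pi_norm u (a, b)) (hv _)

theorem exists_bellmanOp_eq_self [Fintype A] [Nonempty A] (h0 : 0 ≤ lam) (h1 : lam ≤ 1)
    (u : A × B → ℝ) (hγ : ∀ s, IsProbVec (γ s)) (next : S → A × B → S) :
    ∃ v : S → ℝ, (∀ s, |v s| ≤ ‖u‖) ∧ bellmanOp lam u γ next v = v := by
  have : Fact (-‖u‖ ≤ ‖u‖) := ⟨neg_le_self (norm_nonneg u)⟩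
  let T : (S → Set.Icc (-‖u‖) ‖u‖) →o (S → Set.Icc (-‖u‖) ‖u‖) :=
    { toFun := fun v s => ⟨bellmanOp lam u γ next (fun s => v s) s,
        abs_le.1 (abs_bellmanOp_le h0 h1 hγ (fun s => abs_le.2 (v s).2) s)⟩
      monotone' := fun _ _ hv => bellmanOp_mono h0 hγ hv }
  exact ⟨fun s => T.lfp s, fun s => abs_le.2 (T.lfp s).2,
    funext fun s => congrArg Subtype.val (congrFun T.map_lfp s)⟩

end Bellman

section BestResponse

variable {A B S : Type*} [Fintype A] [Nonempty A] [DecidableEq A] [Fintype B] {lam : ℝ}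
  {g : List (A × B) → B → ℝ} {γ : S → B → ℝ} {next : S → A × B → S} {φ : List (A × B) → S}

theorem exists_pure_stationary_contValue_ge (h0 : 0 ≤ lam) (h1 : lam < 1) (u : A × B → ℝ)
    (hγ : ∀ s, IsProbVec (γ s)) (hφ : ∀ h x, φ (h ++ [x]) = next (φ h) x)
    (hgγ : ∀ h, g h = γ (φ h)) :
    ∃ act : S → A, ∀ σ : List (A × B) → A → ℝ, (∀ h, IsProbVec (σ h)) → ∀ h,
      contValue lam u σ g h ≤ contValue lam u (fun h => Pi.single (act (φ h)) 1) g h := by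
  obtain ⟨v, hv, bellman⟩ := exists_bellmanOp_eq_self h0 h1.le u hγ next
  choose act hact using exists_actionValue_eq_bellmanOp lam u γ next v
  rw [bellman] at hact
  have hg (h) : IsProbVec (g h) := hgγ h ▸ hγ (φ h)
  refine ⟨act, fun σ hσ h => le_trans (b := (v ∘ φ) h) ?_ ?_⟩
  · refine contValue_le_of_strategyOp_le h0 h1 hσ hg ⟨-‖u‖, ?_⟩ (fun h => ?_) h
    · rintro _ ⟨h, rfl⟩
      exact (abs_le.1 (hv (φ h))).1
    · rw [strategyOp_comp hφ hgγ]
      exact (hσ h).sum_mul_le fun a =>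
        (actionValue_le_bellmanOp (φ h) a).trans_eq (congrFun bellman (φ h))
  · refine le_contValue_of_le_strategyOp h0 h1 (fun h => isProbVec_single _) hg ⟨‖u‖, ?_⟩
      (fun h => ?_) h
    · rintro _ ⟨h, rfl⟩
      exact (abs_le.1 (hv (φ h))).2
    · simp [strategyOp_comp hφ hgγ, Pi.single_apply, hact]

theorem stationary_markov_best_response_general (h0 : 0 ≤ lam) (h1 : lam < 1) (u : A × B → ℝ)
    (hγ : ∀ s, IsProbVec (γ s)) (hφ : ∀ h x, φ (h ++ [x]) = next (φ h) x)
    (hgγ : ∀ h, g h = γ (φ h)) :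
    ∃ act : S → A,
      (∀ h₀ : List (A × B),
        contValue lam u (fun h => Pi.single (act (φ h)) 1) g h₀ =
          ⨆ σ : {σ : List (A × B) → A → ℝ // ∀ h, IsProbVec (σ h)},
            contValue lam u σ.1 g h₀) ∧
      (∀ h₀ : List (A × B),
        (⨆ σ : {σ : List (A × B) → A → ℝ // ∀ h, IsProbVec (σ h)},
            contValue lam u σ.1 g h₀) =
          ⨆ σ : {σ : List (A × B) → A → ℝ //
              (∀ h, IsProbVec (σ h)) ∧ ∀ h h', φ h = φ h' → σ h = σ h'},
            contValue lam u σ.1 g h₀) := by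
  obtain ⟨act, best⟩ := exists_pure_stationary_contValue_ge h0 h1 u hγ hφ hgγ
  have sup_eq (h₀) := ciSup_subtype_eq_of_forall_le
    (f := fun σ => contValue lam u σ g h₀) (i := fun h => Pi.single (act (φ h)) 1)
    (fun h => isProbVec_single (act (φ h))) fun σ hσ => best σ hσ h₀
  have sup_stationary_eq (h₀) := ciSup_subtype_eq_of_forall_le
    (P := fun σ => (∀ h, IsProbVec (σ h)) ∧ ∀ h h', φ h = φ h' → σ h = σ h')
    (f := fun σ => contValue lam u σ g h₀) (i := fun h => Pi.single (act (φ h)) 1)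
    ⟨fun h => isProbVec_single (act (φ h)), fun h h' hφ => by simp only [hφ]⟩
    fun σ hσ => best σ hσ.1 h₀
  exact ⟨act, fun h₀ => (sup_eq h₀).symm, fun h₀ => (sup_eq h₀).trans (sup_stationary_eq h₀).symm⟩

end BestResponse

/-- **Against a bounded-memory opponent there is a stationary Markov best
response in the memory state.** If `g` has memory at most `κ`, there is a map `π`
from memory states (histories of length at most `κ`) to mixed actions such that
the induced stationary strategy attains, from every initial history, the supremum
of the continuation value over all continuation strategies; in particular that
supremum equals the supremum over strategies with memory at most `κ`. -/
theorem stationary_markov_best_response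
    (lam : ℝ) (hlam : lam ∈ Set.Ioo (0 : ℝ) 1) (κ : ℕ)
    (u : Ai × Am → ℝ) (hu : ∀ a, u a ∈ Set.Icc (0 : ℝ) 1)
    (g : List (Ai × Am) → Am → ℝ) (hg : ∀ h, IsProbVec (g h))
    (hmem : ∀ h h', suffixK κ h = suffixK κ h' → g h = g h') :
    ∃ π : {l : List (Ai × Am) // l.length ≤ κ} → Ai → ℝ,
      (∀ l, IsProbVec (π l)) ∧
      (∀ h₀ : List (Ai × Am),
        contValue lam u
            (fun h => π ⟨suffixK κ h, by
              simp only [suffixK, List.length_drop]; omega⟩) g h₀ =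
          ⨆ σ : {σ : List (Ai × Am) → Ai → ℝ // ∀ h, IsProbVec (σ h)},
            contValue lam u σ.1 g h₀) ∧
      (∀ h₀ : List (Ai × Am),
        (⨆ σ : {σ : List (Ai × Am) → Ai → ℝ // ∀ h, IsProbVec (σ h)},
            contValue lam u σ.1 g h₀) =
          ⨆ σ : {σ : List (Ai × Am) → Ai → ℝ //
              (∀ h, IsProbVec (σ h)) ∧
              ∀ h h', suffixK κ h = suffixK κ h' → σ h = σ h'},
            contValue lam u σ.1 g h₀) := by
  classical
  obtain ⟨act, attains, sup_eq⟩ := stationary_markov_best_response_general hlam.1.le hlam.2 u hg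
    (next := fun l x => suffixK κ (l ++ [x]))
    (fun h x => (suffixK_suffixK_append_singleton κ h x).symm)
    (fun h => hmem _ _ (suffixK_suffixK κ h).symm)
  exact ⟨fun l => Pi.single (act l.1) 1, fun l => isProbVec_single (act l.1), attains, sup_eq⟩

end BoundedMemory
end
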